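/- Let m be a positive integer and q = p^k a power of a prime p with q ≡ 3 (mod 4) and q ≠ 3, and suppose that p divides m, or gcd(m,(q+1)/2) ≥ 3, or gcd(m,(q−1)/2) ≥ 3. Set G = C_2 ∗ C_m and H = PSL(2,q). Then H is a homomorphic image of G (there is a surjective group homomorphism G → H), and there exists a generating pair (h1,h2) of H such that for every group homomorphism θ : G → H and every generating pair (g1,g2) of G one has (θ(g1), θ(g2)) ≠ (h1,h2). -/

import Mathlib

/-- `SL(2,F)` -/
abbrev SL2 (F : Type) [Field F] : Type := Matrix.SpecialLinearGroup (Fin 2) F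

/-- `PSL(2,F)`, the quotient of `SL(2,F)` by its centre `{±I}`. -/
abbrev PSL2 (F : Type) [Field F] : Type := SL2 F ⧸ Subgroup.center (SL2 F)

/-- The cyclic group of order `m`. -/
abbrev Cyc (m : ℕ) : Type := Multiplicative (ZMod m)

section pieceA

open Matrix

section gen
variable {F : Type*} [Field F]

/-- The subgroup contains the matrix with the given entries. -/
def Mem4 (S : Subgroup (SpecialLinearGroup (Fin 2) F)) (a b c d : F) : Prop :=
  ∃ M ∈ S, M.1 = !![a, b; c, d]

variable {S : Subgroup (SpecialLinearGroup (Fin 2) F)}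

theorem Mem4.det {a b c d : F} (h : Mem4 S a b c d) : a * d - b * c = 1 := by
  obtain ⟨M, -, hM⟩ := h
  have := M.2
  rwa [show M.1 = !![a, b; c, d] from hM, det_fin_two_of] at this

theorem Mem4.mul {a b c d a' b' c' d' x y z w : F} (h : Mem4 S a b c d) (h' : Mem4 S a' b' c' d')
    (hx : x = a * a' + b * c') (hy : y = a * b' + b * d')
    (hz : z = c * a' + d * c') (hw : w = c * b' + d * d') : Mem4 S x y z w := by
  obtain ⟨M, hMS, hM⟩ := h
  obtain ⟨M', hMS', hM'⟩ := h'
  refine ⟨M * M', S.mul_mem hMS hMS', ?_⟩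
  change M.1 * M'.1 = _
  rw [hM, hM', Matrix.mul_fin_two, hx, hy, hz, hw]

theorem Mem4.inv {a b c d : F} (h : Mem4 S a b c d) : Mem4 S d (-b) (-c) a := by
  obtain ⟨M, hMS, hM⟩ := h
  refine ⟨M⁻¹, S.inv_mem hMS, ?_⟩
  change adjugate M.1 = _
  rw [hM, adjugate_fin_two_of]

theorem mem4_of_mem {M : SpecialLinearGroup (Fin 2) F} (h : M ∈ S) :
    Mem4 S (M 0 0) (M 0 1) (M 1 0) (M 1 1) := ⟨M, h, eta_fin_two _⟩

theorem mem_of_mem4 {M : SpecialLinearGroup (Fin 2) F}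
    (h : Mem4 S (M 0 0) (M 0 1) (M 1 0) (M 1 1)) : M ∈ S := by
  obtain ⟨N, hN, h⟩ := h
  have : M = N := by
    apply Subtype.ext
    exact (eta_fin_two M.1).trans h.symm
  rwa [this]

theorem gen_of_up (hU : ∀ t, Mem4 S 1 t 0 1) {a b c d : F}
    (hM : Mem4 S a b c d) (hc : c ≠ 0) : S = ⊤ := by
  have hdet := hM.det
  have hW : Mem4 S 0 (-c⁻¹) c 0 := by
    have h1 : Mem4 S 0 (-c⁻¹) c d := by
      refine (hU (-a / c)).mul hM ?_ ?_ ?_ ?_ <;> field_simp <;> try ring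
      linear_combination hdet
    refine h1.mul (hU (-d / c)) ?_ ?_ ?_ ?_ <;> field_simp <;> ring
  have hL : ∀ t : F, Mem4 S 1 0 t 1 := by
    intro t
    have h1 : Mem4 S 0 (-c⁻¹) c (-t / c) := by
      refine hW.mul (hU (-t / c ^ 2)) ?_ ?_ ?_ ?_ <;> field_simp <;> ring
    refine h1.mul hW.inv ?_ ?_ ?_ ?_ <;> field_simp <;> ring
  have key : ∀ x y z w : F, x * w - y * z = 1 → z ≠ 0 → Mem4 S x y z w := by
    intro x y z w h hz
    have h1 : Mem4 S x ((x - 1) / z) z 1 := by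
      refine (hU ((x - 1) / z)).mul (hL z) ?_ ?_ ?_ ?_ <;> field_simp <;> ring
    refine h1.mul (hU ((w - 1) / z)) ?_ ?_ ?_ ?_ <;> field_simp <;> try ring
    linear_combination -h
  rw [eq_top_iff]
  rintro N -
  apply mem_of_mem4
  have hdet' : N 0 0 * N 1 1 - N 0 1 * N 1 0 = 1 := by
    have := N.2
    rwa [det_fin_two] at this
  generalize N 0 0 = x at *
  generalize N 0 1 = y at *
  generalize N 1 0 = z at *
  generalize N 1 1 = w at *
  by_cases hz : z = 0
  · subst hz
    have hx : x ≠ 0 := by rintro rfl; simp at hdet'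
    have h1 := key x y x (y + w) (by linear_combination hdet') hx
    refine (hL (-1)).mul h1 ?_ ?_ ?_ ?_ <;> ring
  · exact key x y z w hdet' hz

/-- all squares: torus plus one unipotent -/
theorem up_of_diag [Fintype F] (hD : ∀ x : F, x ≠ 0 → Mem4 S x 0 0 x⁻¹) {x t y : F} (ht : t ≠ 0)
    (hP : Mem4 S x t 0 y) (h2 : (2 : F) ≠ 0) : ∀ t, Mem4 S 1 t 0 1 := by
  have hxy : x * y = 1 := by have := hP.det; linear_combination this
  have hx : x ≠ 0 := left_ne_zero_of_mul_eq_one hxy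
  have hy : y = x⁻¹ := eq_inv_of_mul_eq_one_right hxy
  subst hy
  have h1 : Mem4 S 1 (x⁻¹ * t) 0 1 := by
    refine (hD x⁻¹ (inv_ne_zero hx)).mul hP ?_ ?_ ?_ ?_ <;> field_simp <;> ring
  have hs : ∀ h : F, Mem4 S 1 (h ^ 2 * (x⁻¹ * t)) 0 1 := by
    intro h
    by_cases hh : h = 0
    · subst hh
      refine (hD x hx).mul (hD x⁻¹ (inv_ne_zero hx)) ?_ ?_ ?_ ?_ <;> field_simp <;> ring
    · have h3 : Mem4 S h (h * (x⁻¹ * t)) 0 h⁻¹ := by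
        refine (hD h hh).mul h1 ?_ ?_ ?_ ?_ <;> ring
      refine h3.mul (hD h⁻¹ (inv_ne_zero hh)) ?_ ?_ ?_ ?_ <;> field_simp <;> ring
  intro u
  have : u = (((u / (x⁻¹ * t)) + 1) / 2) ^ 2 * (x⁻¹ * t) - (((u / (x⁻¹ * t)) - 1) / 2) ^ 2 * (x⁻¹ * t) := by
    field_simp; ring
  refine (hs (((u / (x⁻¹ * t)) + 1) / 2)).mul (hs (((u / (x⁻¹ * t)) - 1) / 2)).inv ?_ ?_ ?_ ?_ <;> try ring
  linear_combination this

theorem gen_of_diag [Fintype F] (hD : ∀ x : F, x ≠ 0 → Mem4 S x 0 0 x⁻¹) {x t y : F} (ht : t ≠ 0)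
    (hP : Mem4 S x t 0 y) (h2 : (2 : F) ≠ 0) {a b c d : F}
    (hM : Mem4 S a b c d) (hc : c ≠ 0) : S = ⊤ :=
  gen_of_up (up_of_diag hD ht hP h2) hM hc

end gen

end pieceA

section pieceB

open Matrix

section genB
variable {F : Type*} [Field F]
variable {S : Subgroup (SpecialLinearGroup (Fin 2) F)}

theorem lemB [Fintype F] (hcd : 27 ≤ Fintype.card F) (h2 : (2 : F) ≠ 0)
    (hD : ∀ x : F, x ≠ 0 → Mem4 S x 0 0 x⁻¹) {a b c d ρ : F}
    (hM : Mem4 S a b c d) (ha : a ≠ 0) (hb : b ≠ 0) (hc : c ≠ 0) 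
    (hρ : b * c = ρ ^ 2 * (a * d)) : S = ⊤ := by
  classical
  have hdet := hM.det
  have hρ0 : ρ ≠ 0 := by
    rintro rfl
    have : b * c = 0 := by rw [hρ]; ring
    simp_all
  have h1 : a * d * (1 - ρ ^ 2) = 1 := by linear_combination hdet + hρ
  have hρ1 : 1 - ρ ^ 2 ≠ 0 := right_ne_zero_of_mul_eq_one h1
  obtain ⟨h, hh⟩ : ∃ h : F, h * (h ^ 2 - 1) * (h ^ 2 - ρ ^ 2) * (h ^ 4 - ρ ^ 2) ≠ 0 := by
    open Polynomial in
    let P : F[X] := X * (X ^ 2 - C 1) * (X ^ 2 - C (ρ ^ 2)) * (X ^ 4 - C (ρ ^ 2))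
    have hP : P ≠ 0 := by
      refine mul_ne_zero (mul_ne_zero (mul_ne_zero X_ne_zero ?_) ?_) ?_ <;>
        exact X_pow_sub_C_ne_zero (by norm_num) _
    have hdeg : P.natDegree ≤ 9 := by
      simp only [P]; compute_degree
    obtain ⟨x, hx⟩ := Polynomial.exists_eval_ne_zero_of_natDegree_lt_card P hP (by
      rw [Cardinal.mk_fintype]; exact_mod_cast by omega)
    refine ⟨x, ?_⟩
    simpa [P] using hx
  have hh4 := right_ne_zero_of_mul hh
  have hh := left_ne_zero_of_mul hh
  have hh2 := right_ne_zero_of_mul hh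
  have hh := left_ne_zero_of_mul hh
  have hh1 := right_ne_zero_of_mul hh
  have hh0 := left_ne_zero_of_mul hh
  have hh1' : 1 - h ^ 2 ≠ 0 := by intro h'; apply hh1; linear_combination -h'
  have hh2' : ρ ^ 2 - h ^ 2 ≠ 0 := by intro h'; apply hh2; linear_combination -h'
  have conj : ∀ x : F, x ≠ 0 → Mem4 S (a * d * x - b * c * x⁻¹) (b * d * (x - x⁻¹))
      (- (a * c * (x - x⁻¹))) (a * d * x⁻¹ - b * c * x) := by
    intro x hx
    have h3 : Mem4 S (d * x) (-b * x⁻¹) (-c * x) (a * x⁻¹) := by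
      refine hM.inv.mul (hD x hx) ?_ ?_ ?_ ?_ <;> ring
    refine h3.mul hM ?_ ?_ ?_ ?_ <;> ring
  have hx0 : -h / ρ ≠ 0 := div_ne_zero (neg_ne_zero.2 hh0) hρ0
  have he0 : ρ * (1 - h ^ 2) / (ρ ^ 2 - h ^ 2) ≠ 0 := div_ne_zero (mul_ne_zero hρ0 hh1') hh2'
  have hfin := ((conj _ hx0).mul (hD _ he0) rfl rfl rfl rfl).mul (conj _ hh0) rfl rfl rfl rfl
  have had : d = 1 / (a * (1 - ρ ^ 2)) := by field_simp; linear_combination h1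
  have hcc : c = ρ ^ 2 / (b * (1 - ρ ^ 2)) := by
    field_simp
    linear_combination (1 - ρ ^ 2) * hρ + ρ ^ 2 * h1
  have hz : -(a * c * (-h / ρ - (-h / ρ)⁻¹)) * (ρ * (1 - h ^ 2) / (ρ ^ 2 - h ^ 2)) * (a * d * h - b * c * h⁻¹) +
       (a * d * (-h / ρ)⁻¹ - b * c * (-h / ρ)) * (ρ * (1 - h ^ 2) / (ρ ^ 2 - h ^ 2))⁻¹ * (-(a * c * (h - h⁻¹))) = 0 := by
    rw [had, hcc]
    field_simp
    ring
  have hy : (a * d * (-h / ρ) - b * c * (-h / ρ)⁻¹) * (ρ * (1 - h ^ 2) / (ρ ^ 2 - h ^ 2)) * (b * d * (h - h⁻¹)) +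
       (b * d * (-h / ρ - (-h / ρ)⁻¹)) * (ρ * (1 - h ^ 2) / (ρ ^ 2 - h ^ 2))⁻¹ * (a * d * h⁻¹ - b * c * h) ≠ 0 := by
    have : (a * d * (-h / ρ) - b * c * (-h / ρ)⁻¹) * (ρ * (1 - h ^ 2) / (ρ ^ 2 - h ^ 2)) * (b * d * (h - h⁻¹)) +
       (b * d * (-h / ρ - (-h / ρ)⁻¹)) * (ρ * (1 - h ^ 2) / (ρ ^ 2 - h ^ 2))⁻¹ * (a * d * h⁻¹ - b * c * h)
       = - (b * d * (h ^ 4 - ρ ^ 2) * (1 - ρ ^ 2) ^ 2 / (ρ ^ 2 * (ρ ^ 2 - h ^ 2) * (1 - h ^ 2))) := by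
      rw [had, hcc]
      field_simp
      ring
    rw [this]
    refine neg_ne_zero.2 (div_ne_zero ?_ ?_) <;> simp_all
  simp only [mul_zero, add_zero, zero_add] at hfin
  rw [hz] at hfin
  exact gen_of_diag hD hy hfin h2 hM hc

theorem lemB' [Fintype F] (hcd : 27 ≤ Fintype.card F) (h2 : (2 : F) ≠ 0)
    (hD : ∀ x : F, x ≠ 0 → Mem4 S x 0 0 x⁻¹) {s β γ : F}
    (hM : Mem4 S s β γ (-s)) (hs : s ≠ 0) (hγ : γ ≠ 0) (hβ : β ≠ 0)
    (hns : ¬ IsSquare (1 + s ^ 2)) 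
    (hsq : ∀ x y : F, x ≠ 0 → ¬ IsSquare x → ¬ IsSquare y → IsSquare (x * y)) : S = ⊤ := by
  classical
  have hdet := hM.det
  obtain ⟨R, hR⟩ : ∃ R, R = 1 + s ^ 2 := ⟨_, rfl⟩
  rw [← hR] at hns
  have hbg : β * γ = - R := by linear_combination -hdet + hR
  have hR0 : R ≠ 0 := by rintro h; apply hns; rw [h]; exact IsSquare.zero
  obtain ⟨e, he⟩ : ∃ e : F, e * (e ^ 2 - 1) * ((s ^ 2 * e ^ 2 - R) * (s ^ 2 - R * e ^ 2) + s ^ 2 * e ^ 2)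
      * ((s ^ 2 * e ^ 2 - R) * (s ^ 2 - R * e ^ 2) - R * e ^ 2) ≠ 0 := by
    open Polynomial in
    let P : F[X] := X * (X ^ 2 - C 1) * ((C (s ^ 2) * X ^ 2 - C R) * (C (s ^ 2) - C R * X ^ 2) + C (s ^ 2) * X ^ 2) *
      ((C (s ^ 2) * X ^ 2 - C R) * (C (s ^ 2) - C R * X ^ 2) - C R * X ^ 2)
    have hP : P ≠ 0 := by
      refine mul_ne_zero (mul_ne_zero (mul_ne_zero X_ne_zero ?_) ?_) ?_
      · exact X_pow_sub_C_ne_zero (by norm_num) _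
      · intro h
        have := congrArg (eval 0) h
        simp at this
        grind
      · intro h
        have := congrArg (eval 0) h
        simp at this
        grind
    have hdeg : P.natDegree ≤ 11 := by
      simp only [P]; compute_degree
    obtain ⟨x, hx⟩ := Polynomial.exists_eval_ne_zero_of_natDegree_lt_card P hP (by
      rw [Cardinal.mk_fintype]; exact_mod_cast by omega)
    refine ⟨x, ?_⟩
    simpa [P] using hx
  have hh4 := right_ne_zero_of_mul he
  have hh := left_ne_zero_of_mul he
  have hh2 := right_ne_zero_of_mul hh
  have hh := left_ne_zero_of_mul hh
  have hh1 := right_ne_zero_of_mul hh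
  have he0 := left_ne_zero_of_mul hh
  obtain ⟨A, hA⟩ : ∃ A, A = s ^ 2 * e - R * e⁻¹ := ⟨_, rfl⟩
  obtain ⟨D, hDD⟩ : ∃ A, A = s ^ 2 * e⁻¹ - R * e := ⟨_, rfl⟩
  obtain ⟨B, hB⟩ : ∃ A, A = s * (e - e⁻¹) := ⟨_, rfl⟩
  have hB0 : B ≠ 0 := by
    rw [hB]
    refine mul_ne_zero hs ?_
    intro h
    apply hh1
    field_simp at h
    linear_combination h
  have hA0 : A ≠ 0 := by
    rw [hA]
    intro h
    apply hns
    refine ⟨s * e, ?_⟩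
    field_simp at h
    linear_combination -h
  have hAD : A * D = (s ^ 2 * e ^ 2 - R) * (s ^ 2 - R * e ^ 2) / e ^ 2 := by
    rw [hA, hDD]; field_simp
  have hAD1 : A * D + s ^ 2 ≠ 0 := by
    rw [hAD]; intro h; field_simp at h; apply hh2; linear_combination h
  have hAD2 : A * D - R ≠ 0 := by
    rw [hAD]; intro h; field_simp at h; apply hh4; linear_combination h
  have hMe : Mem4 S A (B * β) (B * γ) D := by
    have h3 : Mem4 S (s * e) (β * e⁻¹) (γ * e) (- s * e⁻¹) := by
      refine hM.mul (hD e he0) ?_ ?_ ?_ ?_ <;> ring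
    refine h3.mul hM ?_ ?_ ?_ ?_
    · rw [hA]; linear_combination -e⁻¹ * hbg
    · rw [hB]; ring
    · rw [hB]; ring
    · rw [hDD]; linear_combination -e * hbg
  have hdet2 : A * D + B ^ 2 * R = 1 := by
    have := hMe.det
    linear_combination this + B ^ 2 * hbg
  have hW : ∀ h : F, h ≠ 0 → Mem4 S (s * h * A + β * h⁻¹ * (B * γ)) (s * h * (B * β) + β * h⁻¹ * D)
      (γ * h * A - s * h⁻¹ * (B * γ)) (γ * h * (B * β) - s * h⁻¹ * D) := by
    intro h hh
    have h3 : Mem4 S (s * h) (β * h⁻¹) (γ * h) (- s * h⁻¹) := by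
      refine hM.mul (hD h hh) ?_ ?_ ?_ ?_ <;> ring
    refine h3.mul hMe ?_ ?_ ?_ ?_ <;> ring
  by_cases hv : IsSquare (s * B / A)
  · obtain ⟨h, hh⟩ := hv
    have hh0 : h ≠ 0 := by
      rintro rfl
      simp_all
    have hW := hW h hh0
    have h3 : A * h ^ 2 = s * B := by field_simp at hh; linear_combination -hh
    rw [show γ * h * A - s * h⁻¹ * (B * γ) = 0 by field_simp; linear_combination γ * h3] at hW
    refine gen_of_diag hD ?_ hW h2 hM hγ
    intro h4
    field_simp at h4
    apply hAD1
    have h5 : s * h ^ 2 * B + D = 0 := by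
      rcases mul_eq_zero.1 (h4.trans (mul_zero _)) with h | h
      · exact absurd h hβ
      · linear_combination h
    have h6 : A * D = - s ^ 2 * B ^ 2 := by
      linear_combination A * h5 - s * B * h3
    have h7 : B ^ 2 = 1 := by
      linear_combination hdet2 - h6 - B ^ 2 * hR
    linear_combination h6 - s ^ 2 * h7
  · have hsB : s * B / A ≠ 0 := div_ne_zero (mul_ne_zero hs hB0) hA0
    obtain ⟨h', hh'⟩ := hsq _ _ hsB hv hns
    obtain ⟨h, rfl⟩ : ∃ h, h' = s * h := ⟨h' / s, by field_simp⟩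
    have hh0 : h ≠ 0 := by
      rintro rfl
      rw [mul_zero, mul_zero] at hh'
      exact mul_ne_zero hsB hR0 hh'
    have h3 : h ^ 2 * A * s = R * B := by
      field_simp at hh'
      linear_combination -hh'
    have hW := hW h hh0
    rw [show s * h * A + β * h⁻¹ * (B * γ) = 0 by
      field_simp; linear_combination h3 + B * hbg] at hW
    obtain ⟨x, hx⟩ : ∃ x, x = s * h * (B * β) + β * h⁻¹ * D := ⟨_, rfl⟩
    obtain ⟨z, hz⟩ : ∃ x, x = γ * h * A - s * h⁻¹ * (B * γ) := ⟨_, rfl⟩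
    obtain ⟨y, hy⟩ : ∃ x, x = γ * h * (B * β) - s * h⁻¹ * D := ⟨_, rfl⟩
    rw [← hx, ← hy, ← hz] at hW
    have hxz : x * z = -1 := by linear_combination - hW.det
    have hx0 : x ≠ 0 := by rintro rfl; simp at hxz
    have hy0 : y ≠ 0 := by
      rw [hy]
      intro h4
      field_simp at h4
      have h5 : R * h ^ 2 * B + s * D = 0 := by linear_combination -h4 + h ^ 2 * B * hbg
      apply hAD2
      have h6 : s ^ 2 * (A * D) = - R ^ 2 * B ^ 2 := by
        linear_combination s * A * h5 - R * B * h3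
      have h7 : - (R * B ^ 2) = s ^ 2 := by
        linear_combination s ^ 2 * hdet2 - h6 + R * B ^ 2 * hR
      have h8 : s ^ 2 * (A * D - R) = 0 := by linear_combination h6 + R * h7
      exact (mul_eq_zero.1 h8).resolve_left (pow_ne_zero 2 hs)
    have hT : Mem4 S (- x * z * e⁻¹) (x * y * (e - e⁻¹)) 0 (- z * x * e) := by
      have h3 : Mem4 S (y * e) (- x * e⁻¹) (- z * e) 0 := by
        refine hW.inv.mul (hD e he0) ?_ ?_ ?_ ?_ <;> ring
      refine h3.mul hW ?_ ?_ ?_ ?_ <;> ring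
    refine gen_of_diag hD ?_ hT h2 hM hγ
    refine mul_ne_zero (mul_ne_zero hx0 hy0) ?_
    intro h
    apply hh1
    field_simp at h
    linear_combination h

end genB

end pieceB

section pieceC

open Matrix

section genC
variable {F : Type*} [Field F]

theorem sq_of_nonsq [Fintype F] (x y : F) (hx : ¬ IsSquare x) (hy : ¬ IsSquare y) : IsSquare (x * y) := by
  classical
  have hx0 : x ≠ 0 := by rintro rfl; exact hx IsSquare.zero
  have hy0 : y ≠ 0 := by rintro rfl; exact hy IsSquare.zero
  have h1 := quadraticChar_neg_one_iff_not_isSquare.2 hx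
  have h2 := quadraticChar_neg_one_iff_not_isSquare.2 hy
  rw [← quadraticChar_one_iff_isSquare (mul_ne_zero hx0 hy0), map_mul, h1, h2]
  norm_num

theorem up_of_one [Fintype F] {p : ℕ} [Fact p.Prime] (hp : Fintype.card F = p)
    {S : Subgroup (SpecialLinearGroup (Fin 2) F)} {t : F} (ht : t ≠ 0) (h : Mem4 S 1 t 0 1) :
    ∀ t, Mem4 S 1 t 0 1 := by
  intro u
  have : CharP F p := by
    have := charP_of_card_eq_prime (R := F) (p := p) hp
    exact this
  obtain ⟨z, hz⟩ := (ZMod.castHom_bijective F (n := p) hp).2 (u / t)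
  have hn : ((z.val : ℕ) : F) = u / t := by
    rw [← hz]; rw [ZMod.castHom_apply]; exact ZMod.natCast_val z
  have key : ∀ n : ℕ, Mem4 S 1 (n * t) 0 1 := by
    intro n
    induction n with
    | zero => exact ⟨1, S.one_mem, by simp [Matrix.one_fin_two]⟩
    | succ n ih => refine ih.mul h ?_ ?_ ?_ ?_ <;> push_cast <;> ring
  have := key z.val
  rwa [hn, div_mul_cancel₀ _ ht] at this

theorem diag_of_gen [Fintype F] {S : Subgroup (SpecialLinearGroup (Fin 2) F)} {w : Fˣ}
    (hw : ∀ x, x ∈ Submonoid.powers w) (h : Mem4 S w 0 0 (w : F)⁻¹) :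
    ∀ x : F, x ≠ 0 → Mem4 S x 0 0 x⁻¹ := by
  intro x hx
  obtain ⟨n, hn⟩ := hw (Units.mk0 x hx)
  have key : ∀ n : ℕ, Mem4 S ((w : F) ^ n) 0 0 ((w : F) ^ n)⁻¹ := by
    intro n
    induction n with
    | zero => exact ⟨1, S.one_mem, by simp [Matrix.one_fin_two]⟩
    | succ n ih => refine ih.mul h ?_ ?_ ?_ ?_ <;> simp [pow_succ, mul_comm]
  have h3 := key n
  have : (w : F) ^ n = x := by
    have := congrArg Units.val hn
    simpa using this
  rwa [this] at h3

theorem gen_props [Fintype F] (hcd : 27 ≤ Fintype.card F) (hneg : ∀ x : F, x ^ 2 ≠ -1) : ∃ w : Fˣ,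
    (∀ x, x ∈ Submonoid.powers w) ∧ (w : F) ^ 2 - 1 ≠ 0 ∧ (w : F) ^ 2 + 1 ≠ 0 ∧ (w : F) ^ 4 + 1 ≠ 0 := by
  classical
  obtain ⟨w, hw⟩ := IsCyclic.exists_monoid_generator (α := Fˣ)
  refine ⟨w, hw, ?_, ?_, ?_⟩
  · intro h
    have h1 : w ^ 2 = 1 := by
      ext; push_cast; linear_combination h
    have h2 : ∀ x : Fˣ, x ^ 2 = 1 := by
      intro x
      obtain ⟨n, rfl⟩ := hw x
      change (w ^ n) ^ 2 = 1
      rw [← pow_mul, mul_comm, pow_mul, h1, one_pow]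
    have h3 : ∀ x : F, x = 0 ∨ x = 1 ∨ x = -1 := by
      intro x
      by_cases hx : x = 0
      · exact Or.inl hx
      · right
        have := congrArg Units.val (h2 (Units.mk0 x hx))
        simpa using this
    have h4 : (Finset.univ : Finset F) ⊆ {0, 1, -1} := by
      intro x _
      simpa using h3 x
    have h5 := Finset.card_le_card h4
    have h6 : ({0, 1, -1} : Finset F).card ≤ 3 := Finset.card_le_three
    rw [Finset.card_univ] at h5
    omega
  · intro h
    exact hneg w (by linear_combination h)
  · intro h
    exact hneg (w ^ 2) (by linear_combination h)

/-- The matrix as an element of the special linear group. -/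
def mk4 (a b c d : F) (h : a * d - b * c = 1) : SpecialLinearGroup (Fin 2) F :=
  ⟨!![a, b; c, d], by rw [det_fin_two_of, h]⟩

theorem mk4_mem {S : Subgroup (SpecialLinearGroup (Fin 2) F)} {a b c d : F} {h : a * d - b * c = 1}
    (hS : mk4 a b c d h ∈ S) : Mem4 S a b c d := ⟨_, hS, rfl⟩

theorem part2 [Fintype F] {p : ℕ} [Fact p.Prime] (hneg : ∀ x : F, x ^ 2 ≠ -1) (h2 : (2 : F) ≠ 0)
    (hc : (Fintype.card F = p ∧ (3 : F) ≠ 0) ∨ 27 ≤ Fintype.card F) :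
    ∃ h1 h2 : SpecialLinearGroup (Fin 2) F,
      (∀ S : Subgroup (SpecialLinearGroup (Fin 2) F), h1 ∈ S → h2 ∈ S → S = ⊤) ∧
      (h1.1 * h2.1 - h2.1 * h1.1).det = 4 ∧ h1.1.trace ≠ 0 ∧ h2.1.trace ≠ 0 := by
  rcases hc with ⟨hc, h3⟩ | hc
  · refine ⟨mk4 2 1 1 1 (by ring), mk4 3 1 (-1) 0 (by ring), ?_, ?_, ?_, ?_⟩
    · intro S hS1 hS2
      have hA := mk4_mem hS1
      have hB := mk4_mem hS2
      have hAB : Mem4 S 5 2 2 1 := by refine hA.mul hB ?_ ?_ ?_ ?_ <;> norm_num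
      have hBA : Mem4 S 7 4 (-2) (-1) := by refine hB.mul hA ?_ ?_ ?_ ?_ <;> norm_num
      have hCo : Mem4 S (-1) (-6) 0 (-1) := by refine hAB.mul hBA.inv ?_ ?_ ?_ ?_ <;> norm_num
      have hC2 : Mem4 S 1 12 0 1 := by refine hCo.mul hCo ?_ ?_ ?_ ?_ <;> norm_num
      refine gen_of_up (up_of_one hc ?_ hC2) hA one_ne_zero
      rw [show (12 : F) = 2 * (2 * 3) by norm_num]
      exact mul_ne_zero h2 (mul_ne_zero h2 h3)
    · simp only [mk4, Matrix.mul_fin_two, det_fin_two, Matrix.sub_apply, of_apply, cons_val', cons_val_zero, cons_val_one, cons_val_fin_one]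
      norm_num
    · simp only [mk4, trace_fin_two_of]
      norm_num; exact h3
    · simp only [mk4, trace_fin_two_of]
      norm_num; exact h3
  · obtain ⟨w, hw, hw1, hw2, hw3⟩ := gen_props hc hneg
    have hw0 : (w : F) ≠ 0 := w.ne_zero
    obtain ⟨v, hv⟩ : ∃ v : F, v = w := ⟨_, rfl⟩
    rw [← hv] at hw0 hw1 hw2 hw3
    obtain ⟨c, hcc⟩ : ∃ c : F, c = 4 * v ^ 2 / (v ^ 2 - 1) ^ 2 := ⟨_, rfl⟩
    have h4 : (4 : F) ≠ 0 := by
      rw [show (4 : F) = 2 * 2 by norm_num]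
      exact mul_ne_zero h2 h2
    have hc0 : c ≠ 0 := by
      rw [hcc]
      exact div_ne_zero (mul_ne_zero h4 (pow_ne_zero 2 hw0)) (pow_ne_zero 2 hw1)
    refine ⟨mk4 v 0 0 v⁻¹ (by field_simp; ring), mk4 1 1 c (1 + c) (by ring), ?_, ?_, ?_, ?_⟩
    · intro S hS1 hS2
      have hA := mk4_mem hS1
      have hB := mk4_mem hS2
      have hD := diag_of_gen hw (S := S) (by rw [← hv]; exact hA)
      refine lemB hc h2 hD (ρ := 2 * v / (v ^ 2 + 1)) hB one_ne_zero one_ne_zero hc0 ?_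
      rw [hcc]
      field_simp
      ring
    · simp only [mk4, Matrix.mul_fin_two, det_fin_two, Matrix.sub_apply, of_apply, cons_val', cons_val_zero, cons_val_one, cons_val_fin_one]
      rw [hcc]
      field_simp
      ring
    · simp only [mk4, trace_fin_two_of]
      intro h
      field_simp at h
      apply hw2
      linear_combination h
    · simp only [mk4, trace_fin_two_of]
      rw [hcc]
      intro h
      field_simp at h
      have : 2 * (v ^ 4 + 1) = 0 := by linear_combination h
      exact (mul_ne_zero h2 hw3) this

theorem part1 [Fintype F] {p : ℕ} [Fact p.Prime] (hneg : ∀ x : F, x ^ 2 ≠ -1) (h2 : (2 : F) ≠ 0)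
    (hc : (Fintype.card F = p) ∨ 27 ≤ Fintype.card F) {y : F} (hy : y ≠ 0) :
    ∃ a b : SpecialLinearGroup (Fin 2) F,
      (∀ S : Subgroup (SpecialLinearGroup (Fin 2) F), a ∈ S → b ∈ S → S = ⊤) ∧
      a.1 * a.1 = -1 ∧ b.1.trace = y := by
  rcases hc with hc | hc
  · refine ⟨mk4 0 (-y⁻¹) y 0 (by field_simp; ring), mk4 y (-y⁻¹) y 0 (by field_simp; ring), ?_, ?_, ?_⟩
    · intro S hS1 hS2
      have hA := mk4_mem hS1
      have hB := mk4_mem hS2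
      have hC2 : Mem4 S 1 1 0 1 := by
        refine hB.mul hA.inv ?_ ?_ ?_ ?_ <;> field_simp <;> ring
      exact gen_of_up (up_of_one hc one_ne_zero hC2) hA hy
    · simp only [mk4, Matrix.mul_fin_two, Matrix.one_fin_two]
      simp [hy, Matrix.one_fin_two]
    · simp only [mk4, trace_fin_two_of]
      ring
  · obtain ⟨w, hw, hw1, hw2, hw3⟩ := gen_props hc hneg
    have hw0 : (w : F) ≠ 0 := w.ne_zero
    obtain ⟨v, hv⟩ : ∃ v : F, v = w := ⟨_, rfl⟩
    rw [← hv] at hw0 hw1 hw2 hw3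
    obtain ⟨s, hs⟩ : ∃ s : F, s = y * v / (v ^ 2 - 1) := ⟨_, rfl⟩
    have hs0 : s ≠ 0 := by rw [hs]; exact div_ne_zero (mul_ne_zero hy hw0) hw1
    have hs1 : -(1 + s ^ 2) ≠ 0 := by
      intro h
      apply hneg s
      linear_combination -h
    refine ⟨mk4 s 1 (-(1 + s ^ 2)) (-s) (by ring), 
      mk4 (v * s) v (-(1 + s ^ 2) * v⁻¹) (-s * v⁻¹) (by field_simp; ring), ?_, ?_, ?_⟩
    · intro S hS1 hS2
      have hA := mk4_mem hS1
      have hB := mk4_mem hS2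
      have hT : Mem4 S v 0 0 v⁻¹ := by
        refine hB.mul hA.inv ?_ ?_ ?_ ?_ <;> field_simp <;> ring
      have hD := diag_of_gen hw (S := S) (by rw [← hv]; exact hT)
      by_cases hsq : IsSquare (1 + s ^ 2)
      · obtain ⟨r, hr⟩ := hsq
        refine lemB hc h2 hD (ρ := r / s) hA hs0 one_ne_zero hs1 ?_
        field_simp
        linear_combination -hr
      · exact lemB' hc h2 hD hA hs0 hs1 one_ne_zero hsq (fun x y _ => sq_of_nonsq x y)
    · simp only [mk4, Matrix.mul_fin_two, Matrix.one_fin_two]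
      ext i j; fin_cases i <;> fin_cases j <;> simp <;> ring
    · simp only [mk4, trace_fin_two_of]
      rw [hs]
      field_simp
      ring
end genC

end pieceC

section pieceD

open Matrix

section yex

theorem ch2 {R : Type*} [CommRing R] (b : Matrix (Fin 2) (Fin 2) R) :
    b * b = b.trace • b - b.det • 1 := by
  ext i j
  fin_cases i <;> fin_cases j <;>
    simp [Matrix.mul_apply, Fin.sum_univ_two, trace_fin_two, det_fin_two] <;> ring

theorem mem_F_of_pow {F K : Type*} [Field F] [Fintype F] [Field K] [Algebra F K] (x : K)
    (hx : x ^ Fintype.card F = x) : ∃ y : F, algebraMap F K y = x := by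
  classical
  open Polynomial in
  have hne : (X ^ Fintype.card F - X : K[X]) ≠ 0 :=
    FiniteField.X_pow_card_sub_X_ne_zero K Fintype.one_lt_card
  have hsub : Finset.univ.image (algebraMap F K) ⊆ (Polynomial.X ^ Fintype.card F - Polynomial.X : Polynomial K).roots.toFinset := by
    intro z hz
    simp only [Finset.mem_image, Finset.mem_univ, true_and] at hz
    obtain ⟨y, rfl⟩ := hz
    simp only [Multiset.mem_toFinset, Polynomial.mem_roots hne, Polynomial.IsRoot.def,
      Polynomial.eval_sub, Polynomial.eval_pow, Polynomial.eval_X]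
    rw [← map_pow, FiniteField.pow_card, sub_self]
  have hcard : (Polynomial.X ^ Fintype.card F - Polynomial.X : Polynomial K).roots.toFinset.card ≤
      (Finset.univ.image (algebraMap F K)).card := by
    rw [Finset.card_image_of_injective _ (algebraMap F K).injective, Finset.card_univ]
    refine (Multiset.toFinset_card_le _).trans ((Polynomial.card_roots' _).trans ?_)
    rw [FiniteField.X_pow_card_sub_X_natDegree_eq K Fintype.one_lt_card]
  have heq := Finset.eq_of_subset_of_card_le hsub hcard
  have : x ∈ Finset.univ.image (algebraMap F K) := by
    rw [heq]
    simp only [Multiset.mem_toFinset, Polynomial.mem_roots hne, Polynomial.IsRoot.def,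
      Polynomial.eval_sub, Polynomial.eval_pow, Polynomial.eval_X]
    rw [hx, sub_self]
  simpa using this

theorem pow_of_root {K : Type*} [Field K] (b : Matrix (Fin 2) (Fin 2) K) (hdet : b.det = 1) {ζ : K}
    (h0 : ζ ≠ 0) (htr : b.trace = ζ + ζ⁻¹) (n : ℕ) : (ζ - ζ⁻¹) • b ^ (n + 1) =
      (ζ ^ (n + 1) - ζ⁻¹ ^ (n + 1)) • b - (ζ ^ n - ζ⁻¹ ^ n) • (1 : Matrix (Fin 2) (Fin 2) K) := by
  have hb := ch2 b
  rw [hdet, htr] at hb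
  induction n with
  | zero => simp
  | succ n ih =>
    rw [pow_succ, ← Matrix.smul_mul, ih, Matrix.sub_mul, Matrix.smul_mul, Matrix.smul_mul, hb,
      Matrix.one_mul]
    have e1 : (ζ ^ (n + 1) - ζ⁻¹ ^ (n + 1)) * (ζ + ζ⁻¹) = (ζ ^ (n + 1 + 1) - ζ⁻¹ ^ (n + 1 + 1)) +
      (ζ ^ n - ζ⁻¹ ^ n) := by
      simp only [pow_succ, inv_pow]; field_simp; ring
    rw [smul_sub, smul_smul, e1]
    module

theorem neg_one_of_root {K : Type*} [Field K] (b : Matrix (Fin 2) (Fin 2) K) (hdet : b.det = 1) {ζ : K} {d : ℕ}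
    (h0 : ζ ≠ 0) (htr : b.trace = ζ + ζ⁻¹) (hd : 0 < d) (hζ : ζ ^ d = -1) (hne : ζ - ζ⁻¹ ≠ 0) : b ^ d = -1 := by
  obtain ⟨n, rfl⟩ : ∃ n, d = n + 1 := ⟨d - 1, by omega⟩
  have h := pow_of_root b hdet h0 htr n
  have h1 : ζ⁻¹ ^ (n + 1) = -1 := by rw [inv_pow, hζ]; norm_num
  have h2 : ζ ^ n = - ζ⁻¹ := by
    field_simp; rw [← pow_succ, hζ]
  have h3 : ζ⁻¹ ^ n = - ζ := by
    rw [inv_pow, h2]; field_simp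
  rw [h1, hζ, h2, h3] at h
  have h4 : (ζ - ζ⁻¹) • b ^ (n + 1) = (ζ - ζ⁻¹) • (-1 : Matrix (Fin 2) (Fin 2) K) := by
    rw [h]; module
  exact smul_right_injective _ hne h4

theorem exists_y_aux {F : Type*} [Field F] [Fintype F] (K : Type*) [Field K] [Algebra F K] [IsAlgClosed K] (d : ℕ) (hd : 3 ≤ d)
    (hdv : 2 * d ∣ Fintype.card F + 1 ∨ 2 * d ∣ Fintype.card F - 1) :
    ∃ y : F, y ≠ 0 ∧ ∀ b : Matrix (Fin 2) (Fin 2) F, b.det = 1 → b.trace = y → b ^ d = -1 := by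
  have hq1 : 1 < Fintype.card F := Fintype.one_lt_card
  have hqK : ((Fintype.card F : ℕ) : K) = 0 := by
    rw [← map_natCast (algebraMap F K), FiniteField.cast_card_eq_zero, map_zero]
  have hne : NeZero ((2 * d : ℕ) : K) := by
    constructor
    intro h
    rcases hdv with ⟨c, hc⟩ | ⟨c, hc⟩
    · have := congrArg (Nat.cast : ℕ → K) hc
      rw [Nat.cast_add, Nat.cast_mul (2 * d), h, hqK] at this
      simp at this
    · have h1 : Fintype.card F = 2 * d * c + 1 := by omega
      have := congrArg (Nat.cast : ℕ → K) h1
      rw [Nat.cast_add, Nat.cast_mul (2 * d), h, hqK] at this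
      simp at this
  obtain ⟨ζ, hζ⟩ := HasEnoughRootsOfUnity.exists_primitiveRoot K (2 * d)
  have h0 : ζ ≠ 0 := hζ.ne_zero (by omega)
  have hd1 : ζ ^ d = -1 := by
    have h1 : (ζ ^ d) ^ 2 = 1 := by rw [← pow_mul, mul_comm, hζ.pow_eq_one]
    rcases mul_self_eq_one_iff.1 ((pow_two (ζ ^ d)).symm.trans h1) with h | h
    · have := (hζ.pow_eq_one_iff_dvd d).1 h
      have := Nat.le_of_dvd (by omega) this
      omega
    · exact h
  have hsq1 : ζ ^ 2 ≠ 1 := by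
    intro h
    have := Nat.le_of_dvd (by omega) ((hζ.pow_eq_one_iff_dvd _).1 h)
    omega
  have hsq2 : ζ ^ 2 ≠ -1 := by
    intro h
    have h4 : ζ ^ 4 = 1 := by linear_combination (ζ ^ 2 - 1) * h
    have := Nat.le_of_dvd (by omega) ((hζ.pow_eq_one_iff_dvd _).1 h4)
    omega
  have hy : (ζ + ζ⁻¹) ^ Fintype.card F = ζ + ζ⁻¹ := by
    have := map_add (FiniteField.frobeniusAlgHom F K) ζ ζ⁻¹
    rw [FiniteField.coe_frobeniusAlgHom] at this
    simp only at this
    rw [this, inv_pow]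
    rcases hdv with ⟨c, hc⟩ | ⟨c, hc⟩
    · have h1 : ζ ^ (Fintype.card F) * ζ = 1 := by
        rw [← pow_succ, hc, pow_mul, hζ.pow_eq_one, one_pow]
      rw [eq_inv_of_mul_eq_one_left h1, inv_inv, add_comm]
    · have h1 : ζ ^ (Fintype.card F) = ζ := by
        rw [show Fintype.card F = 2 * d * c + 1 by omega, pow_succ, pow_mul, hζ.pow_eq_one, one_pow, one_mul]
      rw [h1]
  obtain ⟨y, hyy⟩ := mem_F_of_pow (F := F) _ hy
  refine ⟨y, ?_, ?_⟩
  · rintro rfl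
    rw [map_zero] at hyy
    apply hsq2
    field_simp at hyy
    linear_combination -hyy
  · intro b hdet htr
    have h1 : ((algebraMap F K).mapMatrix b) ^ d = -1 := by
      refine neg_one_of_root _ ?_ h0 ?_ (by omega) hd1 ?_
      · rw [← RingHom.map_det, hdet, map_one]
      · rw [← hyy, ← htr, trace_fin_two, trace_fin_two]; simp
      · intro h
        apply hsq1
        field_simp at h
        linear_combination h
    rw [← map_pow] at h1
    have h2 : (algebraMap F K).mapMatrix (b ^ d) = (algebraMap F K).mapMatrix (-1) := by
      rw [h1, map_neg, map_one]
    exact Matrix.map_injective (algebraMap F K).injective h2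

theorem exists_y {F : Type*} [Field F] [Fintype F] (m p k : ℕ) (hp : p.Prime) (hcard : Fintype.card F = p ^ k)
    [CharP F p] (h2 : (2 : F) ≠ 0) (hodd : p ^ k % 4 = 3)
    (hcond : p ∣ m ∨ 3 ≤ Nat.gcd m ((p ^ k + 1) / 2) ∨ 3 ≤ Nat.gcd m ((p ^ k - 1) / 2)) :
    ∃ y : F, y ≠ 0 ∧ ∀ b : Matrix (Fin 2) (Fin 2) F, b.det = 1 → b.trace = y → b ^ m = 1 ∨ b ^ m = -1 := by
  have key : ∀ d, 3 ≤ d → d ∣ m → (2 * d ∣ Fintype.card F + 1 ∨ 2 * d ∣ Fintype.card F - 1) →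
    ∃ y : F, y ≠ 0 ∧ ∀ b : Matrix (Fin 2) (Fin 2) F, b.det = 1 → b.trace = y → b ^ m = 1 ∨ b ^ m = -1 := by
    intro d hd hdm hdv
    obtain ⟨y, hy, h⟩ := exists_y_aux (AlgebraicClosure F) d hd hdv
    refine ⟨y, hy, fun b hb hb' => ?_⟩
    obtain ⟨c, rfl⟩ := hdm
    rw [pow_mul, h b hb hb']
    exact neg_one_pow_eq_or _ c
  rcases hcond with h | h | h
  · refine ⟨2, h2, fun b hb hb' => Or.inl ?_⟩
    obtain ⟨c, rfl⟩ := h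
    have : Fact p.Prime := ⟨hp⟩
    have h1 := ch2 b
    rw [hb, hb'] at h1
    have h3 : (b - 1) ^ 2 = 0 := by
      rw [pow_two, Matrix.sub_mul, Matrix.mul_sub, h1]
      simp only [Matrix.mul_one, Matrix.one_mul]
      module
    have h4 : b ^ p = 1 := by
      have h5 : b = (b - 1) + 1 := by abel
      rw [h5, add_pow_char_of_commute (p := p) (Commute.one_right _), one_pow]
      obtain ⟨r, hr⟩ : ∃ r, p = 2 + r := ⟨p - 2, by have := hp.two_le; omega⟩
      conv_lhs => rw [hr]
      rw [pow_add, h3, zero_mul, zero_add]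
    rw [pow_mul, h4, one_pow]
  · refine key _ h (Nat.gcd_dvd_left _ _) (Or.inl ?_)
    rw [hcard]
    have : p ^ k + 1 = 2 * ((p ^ k + 1) / 2) := by omega
    rw [this]
    exact Nat.mul_dvd_mul_left 2 (by simpa using Nat.gcd_dvd_right m _)
  · refine key _ h (Nat.gcd_dvd_left _ _) (Or.inr ?_)
    rw [hcard]
    have : p ^ k - 1 = 2 * ((p ^ k - 1) / 2) := by omega
    rw [this]
    exact Nat.mul_dvd_mul_left 2 (by simpa using Nat.gcd_dvd_right m _)

end yex

end pieceD

section pieceE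

open Matrix

section grp

theorem cyc_hom {G : Type*} [Group G] (m : ℕ) (x : G) (hx : x ^ m = 1) :
    ∃ f : Multiplicative (ZMod m) →* G, f (Multiplicative.ofAdd 1) = x := by
  let g : ℤ →+ Additive G := zmultiplesHom (Additive G) (Additive.ofMul x)
  have hg : g m = 0 := by
    simp only [g, zmultiplesHom_apply, natCast_zsmul, ← ofMul_pow, hx, ofMul_one]
  refine ⟨AddMonoidHom.toMultiplicativeLeft (ZMod.lift m ⟨g, hg⟩), ?_⟩
  have : ZMod.lift m ⟨g, hg⟩ ((1 : ℤ) : ZMod m) = g 1 := ZMod.lift_coe m ⟨g, hg⟩ 1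
  simp only [Int.cast_one] at this
  simp only [AddMonoidHom.coe_toMultiplicativeLeft, Function.comp_apply, toAdd_ofAdd]
  rw [this]
  simp [g]

theorem cyc_pow {m : ℕ} (hm : 0 < m) (x : Multiplicative (ZMod m)) :
    ∃ n : ℕ, x = (Multiplicative.ofAdd 1) ^ n := by
  have : NeZero m := ⟨hm.ne'⟩
  refine ⟨(Multiplicative.toAdd x).val, ?_⟩
  rw [← ofAdd_nsmul]
  simp

theorem coprod_ind {m : ℕ} (hm : 0 < m)
    (Q : Monoid.Coprod (Multiplicative (ZMod 2)) (Multiplicative (ZMod m)) → Prop)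
    (h1 : Q 1) (ha : Q (Monoid.Coprod.inl (Multiplicative.ofAdd 1)))
    (hb : Q (Monoid.Coprod.inr (Multiplicative.ofAdd 1)))
    (hmul : ∀ x y, Q x → Q y → Q (x * y)) : ∀ g, Q g := by
  intro g
  have hpow : ∀ x, Q x → ∀ n : ℕ, Q (x ^ n) := by
    intro x hx n
    induction n with
    | zero => simpa using h1
    | succ n ih => rw [pow_succ]; exact hmul _ _ ih hx
  induction g using Monoid.Coprod.induction_on with
  | inl x =>
    obtain ⟨n, rfl⟩ := cyc_pow (by norm_num) x
    rw [map_pow]; exact hpow _ ha n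
  | inr x =>
    obtain ⟨n, rfl⟩ := cyc_pow hm x
    rw [map_pow]; exact hpow _ hb n
  | mul x y hx hy => exact hmul _ _ hx hy

theorem mem_center2 {R : Type*} [CommRing R] {M : SpecialLinearGroup (Fin 2) R} :
    M ∈ Subgroup.center (SpecialLinearGroup (Fin 2) R) ↔ ∃ r : R, r ^ 2 = 1 ∧ M.1 = r • 1 := by
  refine Matrix.SpecialLinearGroup.mem_center_iff.trans ?_
  refine exists_congr fun r => ?_
  rw [Fintype.card_fin]
  refine and_congr_right fun _ => ?_
  rw [eq_comm]
  change M.1 = _ ↔ _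
  rw [Matrix.scalar_apply, ← Matrix.smul_one_eq_diagonal]

theorem mk_eq_iff {R : Type*} [CommRing R] {M N : SpecialLinearGroup (Fin 2) R} :
    (QuotientGroup.mk M : SpecialLinearGroup (Fin 2) R ⧸ Subgroup.center (SpecialLinearGroup (Fin 2) R)) = QuotientGroup.mk N ↔
      ∃ r : R, r ^ 2 = 1 ∧ N.1 = r • M.1 := by
  rw [QuotientGroup.eq, mem_center2]
  refine exists_congr fun r => and_congr_right fun _ => ?_
  constructor
  · intro h
    have : N = M * (M⁻¹ * N) := by group
    have := congrArg Subtype.val this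
    rw [this]
    change M.1 * (M⁻¹ * N).1 = _
    rw [h]; simp
  · intro h
    change (M⁻¹).1 * N.1 = _
    rw [h, Matrix.mul_smul]
    congr 1
    have : M⁻¹ * M = 1 := by group
    exact congrArg Subtype.val this

theorem top_of_lift {G : Type*} [Group G] (Z : Subgroup G) [Z.Normal] (S : Subgroup (G ⧸ Z))
    (h : S.comap (QuotientGroup.mk' Z) = ⊤) : S = ⊤ := by
  rw [eq_top_iff]
  rintro x -
  obtain ⟨y, rfl⟩ := QuotientGroup.mk'_surjective Z x
  have : y ∈ S.comap (QuotientGroup.mk' Z) := by rw [h]; trivial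
  exact this

theorem surj_part {F : Type*} [Field F] {m : ℕ} (hm : 0 < m)
    (a b : SpecialLinearGroup (Fin 2) F)
    (hgen : ∀ S : Subgroup (SpecialLinearGroup (Fin 2) F), a ∈ S → b ∈ S → S = ⊤)
    (ha : a.1 * a.1 = -1) (hb : b.1 ^ m = 1 ∨ b.1 ^ m = -1) :
    ∃ φ : Monoid.Coprod (Multiplicative (ZMod 2)) (Multiplicative (ZMod m)) →*
      SpecialLinearGroup (Fin 2) F ⧸ Subgroup.center (SpecialLinearGroup (Fin 2) F),
      Function.Surjective φ := by
  have ha' : (QuotientGroup.mk' (Subgroup.center (SpecialLinearGroup (Fin 2) F)) a) ^ 2 = 1 := by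
    rw [← map_pow]
    refine (QuotientGroup.eq_one_iff _).2 (mem_center2.2 ⟨-1, by ring, ?_⟩)
    rw [pow_two]
    change a.1 * a.1 = _
    rw [ha]; simp
  have hb' : (QuotientGroup.mk' (Subgroup.center (SpecialLinearGroup (Fin 2) F)) b) ^ m = 1 := by
    rw [← map_pow]
    have e : (b ^ m).1 = b.1 ^ m := Matrix.SpecialLinearGroup.coe_pow b m
    refine (QuotientGroup.eq_one_iff _).2 (mem_center2.2 ?_)
    rcases hb with hb | hb
    · exact ⟨1, by ring, by rw [e, hb]; simp⟩
    · exact ⟨-1, by ring, by rw [e, hb]; simp⟩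
  obtain ⟨f, hf⟩ := cyc_hom 2 _ ha'
  obtain ⟨g, hg⟩ := cyc_hom m _ hb'
  refine ⟨Monoid.Coprod.lift f g, ?_⟩
  rw [← MonoidHom.range_eq_top]
  apply top_of_lift
  apply hgen
  · exact ⟨Monoid.Coprod.inl (Multiplicative.ofAdd 1), by rw [Monoid.Coprod.lift_apply_inl, hf]⟩
  · exact ⟨Monoid.Coprod.inr (Multiplicative.ofAdd 1), by rw [Monoid.Coprod.lift_apply_inr, hg]⟩

end grp

section comm
variable {R : Type*} [CommRing R]

theorem comm_twist (A B X : Matrix (Fin 2) (Fin 2) R) (hX : X ∈ Algebra.adjoin R {A, B}) :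
    ∃ X', (A * B - B * A) * X = X' * (A * B - B * A) := by
  induction hX using Algebra.adjoin_induction with
  | mem x hx =>
    refine ⟨adjugate x, ?_⟩
    rcases hx with rfl | rfl
    · rw [adjugate_fin_two]
      ext i j
      fin_cases i <;> fin_cases j <;> simp [Matrix.mul_apply, Fin.sum_univ_two] <;> ring
    · rw [adjugate_fin_two]
      ext i j
      fin_cases i <;> fin_cases j <;> simp [Matrix.mul_apply, Fin.sum_univ_two] <;> ring
  | algebraMap r => exact ⟨algebraMap _ _ r, (Algebra.commutes r _).symm⟩
  | add x y _ _ hx hy =>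
    obtain ⟨x', hx⟩ := hx
    obtain ⟨y', hy⟩ := hy
    exact ⟨x' + y', by rw [mul_add, hx, hy, add_mul]⟩
  | mul x y _ _ hx hy =>
    obtain ⟨x', hx⟩ := hx
    obtain ⟨y', hy⟩ := hy
    exact ⟨x' * y', by rw [← mul_assoc, hx, mul_assoc, hy, mul_assoc]⟩

theorem comm_left (A B Z X : Matrix (Fin 2) (Fin 2) R) 
    (hA : ∃ E, A * Z - Z * A = E * (A * B - B * A))
    (hB : ∃ E, B * Z - Z * B = E * (A * B - B * A))
    (hX : X ∈ Algebra.adjoin R {A, B}) : ∃ E, X * Z - Z * X = E * (A * B - B * A) := by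
  induction hX using Algebra.adjoin_induction with
  | mem x hx =>
    rcases hx with rfl | rfl
    · exact hA
    · exact hB
  | algebraMap r => exact ⟨0, by rw [Algebra.commutes r Z]; simp⟩
  | add x y _ _ hx hy =>
    obtain ⟨x', hx⟩ := hx
    obtain ⟨y', hy⟩ := hy
    exact ⟨x' + y', by rw [add_mul x' y', ← hx, ← hy]; noncomm_ring⟩
  | mul x y hxm hym hx hy =>
    obtain ⟨x', hx⟩ := hx
    obtain ⟨y', hy⟩ := hy
    obtain ⟨t, ht⟩ := comm_twist A B y hym
    refine ⟨x * y' + x' * t, ?_⟩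
    rw [add_mul, mul_assoc x y', ← hy, mul_assoc x' t, ← ht, ← mul_assoc x', ← hx]
    noncomm_ring

theorem comm_dvd (A B X Y : Matrix (Fin 2) (Fin 2) R)
    (hX : X ∈ Algebra.adjoin R {A, B}) (hY : Y ∈ Algebra.adjoin R {A, B}) :
    (A * B - B * A).det ∣ (X * Y - Y * X).det := by
  have h1 : ∃ E, X * A - A * X = E * (A * B - B * A) :=
    comm_left A B A X ⟨0, by simp⟩ ⟨-1, by noncomm_ring⟩ hX
  have h2 : ∃ E, X * B - B * X = E * (A * B - B * A) :=
    comm_left A B B X ⟨1, by noncomm_ring⟩ ⟨0, by simp⟩ hX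
  have h3 : ∃ E, Y * X - X * Y = E * (A * B - B * A) := by
    obtain ⟨E1, h1⟩ := h1
    obtain ⟨E2, h2⟩ := h2
    exact comm_left A B X Y ⟨-E1, by rw [neg_mul, ← h1]; noncomm_ring⟩
      ⟨-E2, by rw [neg_mul, ← h2]; noncomm_ring⟩ hY
  obtain ⟨E, hE⟩ := h3
  refine ⟨(-E).det, ?_⟩
  rw [mul_comm, ← det_mul, neg_mul, ← hE]
  congr 1
  noncomm_ring
end comm

end pieceE

section pieceG

open Matrix

section liftmain

theorem adjoin_inv {R : Type*} [CommRing R] (T : Subalgebra R (Matrix (Fin 2) (Fin 2) R))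
    (M : SpecialLinearGroup (Fin 2) R) (h : M.1 ∈ T) : (M⁻¹).1 ∈ T := by
  have : (M⁻¹).1 = algebraMap R _ M.1.trace - M.1 := by
    change adjugate M.1 = _
    rw [adjugate_fin_two, trace_fin_two]
    ext i j
    fin_cases i <;> fin_cases j <;> simp [Matrix.algebraMap_matrix_apply]
  rw [this]
  exact T.sub_mem (T.algebraMap_mem _) h

theorem conj_det {K : Type*} [Field K] {P N1 N2 X Y : Matrix (Fin 2) (Fin 2) K} (hP : P.det ≠ 0)
    (h1 : N1 * P = P * X) (h2 : N2 * P = P * Y) :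
    (X * Y - Y * X).det = (N1 * N2 - N2 * N1).det := by
  have : P * (X * Y - Y * X) = (N1 * N2 - N2 * N1) * P := by
    rw [Matrix.mul_sub, Matrix.sub_mul, ← Matrix.mul_assoc, ← Matrix.mul_assoc, ← h1, ← h2,
      Matrix.mul_assoc, Matrix.mul_assoc, ← h1, ← h2, Matrix.mul_assoc, Matrix.mul_assoc]
  have h3 := congrArg Matrix.det this
  rw [det_mul, det_mul, mul_comm] at h3
  exact mul_right_cancel₀ hP h3

theorem conj_trace {K : Type*} [Field K] {P N X : Matrix (Fin 2) (Fin 2) K} (hP : P.det ≠ 0)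
    (h1 : N * P = P * X) : X.trace = N.trace := by
  have hu : IsUnit P.det := isUnit_iff_ne_zero.2 hP
  have : X = P⁻¹ * (N * P) := by
    rw [h1, ← Matrix.mul_assoc, Matrix.nonsing_inv_mul _ hu, Matrix.one_mul]
  rw [this, trace_mul_comm, Matrix.mul_assoc, Matrix.mul_nonsing_inv _ hu, Matrix.mul_one]

open Polynomial in
theorem lift_main {F K : Type*} [Field F] [Field K] [Algebra F K] {m : ℕ} (hm : 0 < m)
    (θ : Monoid.Coprod (Multiplicative (ZMod 2)) (Multiplicative (ZMod m)) →*
      SpecialLinearGroup (Fin 2) F ⧸ Subgroup.center (SpecialLinearGroup (Fin 2) F))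
    (g1 g2 : Monoid.Coprod (Multiplicative (ZMod 2)) (Multiplicative (ZMod m)))
    (hg : Subgroup.closure {g1, g2} = ⊤)
    (h1 h2 : SpecialLinearGroup (Fin 2) F) (hD : (h1.1 * h2.1 - h2.1 * h1.1).det = 4)
    (t1 : h1.1.trace ≠ 0) (t2 : h2.1.trace ≠ 0)
    (e1 : θ g1 = QuotientGroup.mk h1) (e2 : θ g2 = QuotientGroup.mk h2)
    (A0 B0 : SpecialLinearGroup (Fin 2) F)
    (hA0 : θ (Monoid.Coprod.inl (Multiplicative.ofAdd 1)) = QuotientGroup.mk A0)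
    (hB0 : θ (Monoid.Coprod.inr (Multiplicative.ofAdd 1)) = QuotientGroup.mk B0)
    (A B : SpecialLinearGroup (Fin 2) K[X])
    (hA2 : A ^ 2 ∈ Subgroup.center (SpecialLinearGroup (Fin 2) K[X]))
    (hBm : B ^ m ∈ Subgroup.center (SpecialLinearGroup (Fin 2) K[X]))
    (P : Matrix (Fin 2) (Fin 2) K) (hP : P.det ≠ 0) (w0 : K)
    (hAP : (algebraMap F K).mapMatrix A0.1 * P = P * (evalRingHom w0).mapMatrix A.1)
    (hBP : (algebraMap F K).mapMatrix B0.1 * P = P * (evalRingHom w0).mapMatrix B.1)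
    (Sh : Matrix (Fin 2) (Fin 2) K[X] → Prop) (Sh1 : Sh 1) (ShA : Sh A.1) (ShB : Sh B.1)
    (Shm : ∀ X Y, Sh X → Sh Y → Sh (X * Y))
    (hne : (A.1 * B.1 - B.1 * A.1).det ≠ 0) :
    ∃ X Y : Matrix (Fin 2) (Fin 2) K[X], Sh X ∧ Sh Y ∧
      (∃ u : K, (X * Y - Y * X).det = C u * (A.1 * B.1 - B.1 * A.1).det) ∧
      eval w0 (X * Y - Y * X).det = 4 ∧ eval w0 X.trace ≠ 0 ∧ eval w0 Y.trace ≠ 0 := by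
  have hA2' : (QuotientGroup.mk' (Subgroup.center (SpecialLinearGroup (Fin 2) K[X])) A) ^ 2 = 1 := by
    rw [← map_pow]
    exact (QuotientGroup.eq_one_iff _).2 hA2
  have hBm' : (QuotientGroup.mk' (Subgroup.center (SpecialLinearGroup (Fin 2) K[X])) B) ^ m = 1 := by
    rw [← map_pow]
    exact (QuotientGroup.eq_one_iff _).2 hBm
  obtain ⟨f, hf⟩ := cyc_hom 2 _ hA2'
  obtain ⟨g, hg'⟩ := cyc_hom m _ hBm'
  obtain ⟨Θ, hΘ⟩ : ∃ Θ, Θ = Monoid.Coprod.lift f g := ⟨_, rfl⟩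
  have hΘa : Θ (Monoid.Coprod.inl (Multiplicative.ofAdd 1)) = QuotientGroup.mk A := by
    rw [hΘ, Monoid.Coprod.lift_apply_inl, hf]; rfl
  have hΘb : Θ (Monoid.Coprod.inr (Multiplicative.ofAdd 1)) = QuotientGroup.mk B := by
    rw [hΘ, Monoid.Coprod.lift_apply_inr, hg']; rfl
  have good : ∀ x, ∃ (M : SpecialLinearGroup (Fin 2) K[X]) (n : SpecialLinearGroup (Fin 2) F),
      Θ x = QuotientGroup.mk M ∧ θ x = QuotientGroup.mk n ∧
      (algebraMap F K).mapMatrix n.1 * P = P * (evalRingHom w0).mapMatrix M.1 ∧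
      M.1 ∈ Algebra.adjoin K[X] {A.1, B.1} ∧ Sh M.1 := by
    apply coprod_ind hm
    · refine ⟨1, 1, by simp, by simp, ?_, ?_, Sh1⟩
      · change (algebraMap F K).mapMatrix 1 * P = P * (evalRingHom w0).mapMatrix 1
        simp only [map_one, Matrix.one_mul, Matrix.mul_one]
      · exact Subalgebra.one_mem _
    · exact ⟨A, A0, hΘa, hA0, hAP, Algebra.subset_adjoin (by simp), ShA⟩
    · exact ⟨B, B0, hΘb, hB0, hBP, Algebra.subset_adjoin (by simp), ShB⟩
    · rintro x y ⟨M, n, hM, hn, hP, hT, hS⟩ ⟨M', n', hM', hn', hP', hT', hS'⟩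
      refine ⟨M * M', n * n', by rw [map_mul, hM, hM']; rfl, by rw [map_mul, hn, hn']; rfl, ?_, ?_, ?_⟩
      · change (algebraMap F K).mapMatrix (n.1 * n'.1) * P = P * (evalRingHom w0).mapMatrix (M.1 * M'.1)
        rw [map_mul, map_mul, Matrix.mul_assoc, hP', ← Matrix.mul_assoc, hP, Matrix.mul_assoc]
      · exact Subalgebra.mul_mem _ hT hT'
      · exact Shm _ _ hS hS'
  obtain ⟨X, n1, hX, hn1, hXP, hXT, hXS⟩ := good g1
  obtain ⟨Y, n2, hY, hn2, hYP, hYT, hYS⟩ := good g2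
  have conv : ∀ x, ∃ M : SpecialLinearGroup (Fin 2) K[X], Θ x = QuotientGroup.mk M ∧ 
      M.1 ∈ Algebra.adjoin K[X] {X.1, Y.1} := by
    intro x
    have hx : x ∈ Subgroup.closure {g1, g2} := by rw [hg]; trivial
    induction hx using Subgroup.closure_induction with
    | mem x hx =>
      rcases hx with rfl | rfl
      · exact ⟨X, hX, Algebra.subset_adjoin (by simp)⟩
      · exact ⟨Y, hY, Algebra.subset_adjoin (by simp)⟩
    | one => exact ⟨1, by simp, Subalgebra.one_mem _⟩
    | mul x y _ _ hx hy =>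
      obtain ⟨M, hM, hT⟩ := hx
      obtain ⟨M', hM', hT'⟩ := hy
      exact ⟨M * M', by rw [map_mul, hM, hM']; rfl, Subalgebra.mul_mem _ hT hT'⟩
    | inv x _ hx =>
      obtain ⟨M, hM, hT⟩ := hx
      exact ⟨M⁻¹, by rw [map_inv, hM]; rfl, adjoin_inv _ _ hT⟩
  have conv' : ∀ x (N : SpecialLinearGroup (Fin 2) K[X]), Θ x = QuotientGroup.mk N →
      N.1 ∈ Algebra.adjoin K[X] {X.1, Y.1} := by
    intro x N hN
    obtain ⟨M, hM, hT⟩ := conv x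
    obtain ⟨r, -, hr⟩ := mk_eq_iff.1 (hM.symm.trans hN)
    rw [hr]
    exact Subalgebra.smul_mem _ hT r
  have d1 := comm_dvd _ _ _ _ hXT hYT
  have d2 := comm_dvd _ _ _ _ (conv' _ _ hΘa) (conv' _ _ hΘb)
  obtain ⟨r1, hr1, hr1'⟩ := mk_eq_iff.1 (hn1.symm.trans e1)
  obtain ⟨r2, hr2, hr2'⟩ := mk_eq_iff.1 (hn2.symm.trans e2)
  refine ⟨X.1, Y.1, hXS, hYS, ?_, ?_, ?_, ?_⟩
  · obtain ⟨e, he⟩ := d1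
    obtain ⟨f, hf⟩ := d2
    have : e * f = 1 := by
      rw [he, mul_assoc] at hf
      exact (mul_right_eq_self₀.1 hf.symm).resolve_right hne
    obtain ⟨u, hu, rfl⟩ := Polynomial.isUnit_iff.1 (IsUnit.of_mul_eq_one f this)
    exact ⟨u, by rw [he, mul_comm]⟩
  · have h3 : eval w0 (X.1 * Y.1 - Y.1 * X.1).det =
      ((evalRingHom w0).mapMatrix X.1 * (evalRingHom w0).mapMatrix Y.1 -
        (evalRingHom w0).mapMatrix Y.1 * (evalRingHom w0).mapMatrix X.1).det := by
      rw [← map_mul, ← map_mul, ← map_sub, ← RingHom.map_det]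
      rfl
    rw [h3, conj_det hP hXP hYP, ← map_mul, ← map_mul, ← map_sub, ← RingHom.map_det]
    have h4 : (n1.1 * n2.1 - n2.1 * n1.1).det = 4 := by
      rw [← hD, hr1', hr2']
      have : r1 • n1.1 * r2 • n2.1 - r2 • n2.1 * r1 • n1.1 = (r1 * r2) • (n1.1 * n2.1 - n2.1 * n1.1) := by
        simp only [Matrix.smul_mul, Matrix.mul_smul, smul_smul, smul_sub, mul_comm]
      rw [this, det_smul, Fintype.card_fin, mul_pow, hr1, hr2]
      ring
    rw [h4]; exact map_ofNat (algebraMap F K) 4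
  · have h3 : eval w0 X.1.trace = ((evalRingHom w0).mapMatrix X.1).trace := by
      simp [trace_fin_two]
    have h4 : ((algebraMap F K).mapMatrix n1.1).trace = algebraMap F K n1.1.trace := by
      simp [trace_fin_two]
    rw [h3, conj_trace hP hXP, h4]
    intro h
    apply t1
    rw [hr1', trace_smul, (map_eq_zero _).1 h, smul_zero]
  · have h3 : eval w0 Y.1.trace = ((evalRingHom w0).mapMatrix Y.1).trace := by
      simp [trace_fin_two]
    have h4 : ((algebraMap F K).mapMatrix n2.1).trace = algebraMap F K n2.1.trace := by
      simp [trace_fin_two]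
    rw [h3, conj_trace hP hYP, h4]
    intro h
    apply t2
    rw [hr2', trace_smul, (map_eq_zero _).1 h, smul_zero]

end liftmain

end pieceG

section pieceH

open Matrix Polynomial

set_option linter.unusedSimpArgs false
section shapes
variable {F K : Type*} [Field F] [Field K] [Algebra F K]

/-- Elements of the torus over `F`. -/
def Tor (F : Type*) {K : Type*} [Field F] [Field K] [Algebra F K] (δ p p' : K) : Prop :=
  ∃ c s : F, p = algebraMap F K c + algebraMap F K s * δ ∧ p' = algebraMap F K c - algebraMap F K s * δ ∧ p * p' = 1

theorem Tor.mul {δ p p' q q' : K} {E : F} (hδ : δ ^ 2 = algebraMap F K E)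
    (h : Tor F δ p p') (h' : Tor F δ q q') : Tor F δ (p * q) (p' * q') := by
  obtain ⟨c, s, rfl, rfl, h⟩ := h
  obtain ⟨c', s', rfl, rfl, h'⟩ := h'
  refine ⟨c * c' + s * s' * E, c * s' + s * c', ?_, ?_, ?_⟩
  · simp only [map_add, map_mul]; linear_combination algebraMap F K s * algebraMap F K s' * hδ
  · simp only [map_add, map_mul]; linear_combination algebraMap F K s * algebraMap F K s' * hδ
  · rw [mul_mul_mul_comm, h, h', one_mul]

theorem Tor.swap {δ p p' : K} (h : Tor F δ p p') : Tor F δ p' p := by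
  obtain ⟨c, s, rfl, rfl, h⟩ := h
  exact ⟨c, -s, by simp; ring, by simp, by rw [mul_comm, h]⟩

theorem Tor.neg {δ p p' : K} (h : Tor F δ p p') : Tor F δ (-p) (-p') := by
  obtain ⟨c, s, rfl, rfl, h⟩ := h
  exact ⟨-c, -s, by simp; ring, by simp; ring, by rw [neg_mul_neg, h]⟩

theorem Tor.diff {δ p p' : K} (h : Tor F δ p p') : ∃ c s : F,
    p - p' = 2 * algebraMap F K s * δ ∧ (algebraMap F K c) ^ 2 - (algebraMap F K s * δ) ^ 2 = 1 := by
  obtain ⟨c, s, rfl, rfl, h⟩ := h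
  exact ⟨c, s, by ring, by linear_combination h⟩

/-- The shape at `0`, in the non-parabolic case. -/
def ShN (F : Type*) {K : Type*} [Field F] [Field K] [Algebra F K] (δ : K) (M : Matrix (Fin 2) (Fin 2) K[X]) : Prop :=
  ∃ p p' : K, Tor F δ p p' ∧
    ((eval 0 (M 0 0) = p ∧ eval 0 (M 0 1) = 0 ∧ eval 0 (M 1 0) = 0 ∧ eval 0 (M 1 1) = p') ∨
     (eval 0 (M 0 0) = 0 ∧ eval 0 (M 0 1) = p ∧ eval 0 (M 1 0) = -p' ∧ eval 0 (M 1 1) = 0))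

theorem ShN.mul {δ : K} {E : F} (hδ : δ ^ 2 = algebraMap F K E) (M N : Matrix (Fin 2) (Fin 2) K[X])
    (hM : ShN F δ M) (hN : ShN F δ N) : ShN F δ (M * N) := by
  obtain ⟨p, p', hp, hM⟩ := hM
  obtain ⟨q, q', hq, hN⟩ := hN
  unfold ShN
  simp only [Matrix.mul_apply, Fin.sum_univ_two, eval_add, eval_mul]
  rcases hM with ⟨h1, h2, h3, h4⟩ | ⟨h1, h2, h3, h4⟩ <;>
  rcases hN with ⟨k1, k2, k3, k4⟩ | ⟨k1, k2, k3, k4⟩ <;>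
  simp only [h1, h2, h3, h4, k1, k2, k3, k4]
  · exact ⟨_, _, hp.mul hδ hq, Or.inl ⟨by ring, by ring, by ring, by ring⟩⟩
  · exact ⟨_, _, hp.mul hδ hq, Or.inr ⟨by ring, by ring, by ring, by ring⟩⟩
  · exact ⟨_, _, hp.mul hδ hq.swap, Or.inr ⟨by ring, by ring, by ring, by ring⟩⟩
  · exact ⟨_, _, (hp.mul hδ hq.swap).neg, Or.inl ⟨by ring, by ring, by ring, by ring⟩⟩

theorem contra_nonpar (h2 : (2 : F) ≠ 0) (hneg : ∀ x : F, x ^ 2 ≠ -1) {E : F} {δ : K}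
    (hδ : δ ^ 2 = algebraMap F K E) (hδ0 : δ ≠ 0) (w : F) (M N : Matrix (Fin 2) (Fin 2) K[X])
    (hM : ShN F δ M) (hN : ShN F δ N) {u : K}
    (hdet : (M * N - N * M).det = C u * (- (X ^ 2 + C (δ ^ 2))))
    (h4 : eval (algebraMap F K w) (M * N - N * M).det = 4)
    (t1 : eval (algebraMap F K w) M.trace ≠ 0) (t2 : eval (algebraMap F K w) N.trace ≠ 0) : False := by
  have h2K : (2 : K) ≠ 0 := by
    rw [← map_ofNat (algebraMap F K) 2]; exact (_root_.map_ne_zero _).2 h2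
  have h4K : (4 : K) ≠ 0 := by
    rw [show (4 : K) = 2 * 2 by norm_num]; exact mul_ne_zero h2K h2K
  have e0 : eval 0 (M * N - N * M).det = - (u * δ ^ 2) := by
    rw [hdet]; simp
  have ew : -(u * ((algebraMap F K w) ^ 2 + δ ^ 2)) = 4 := by
    rw [← h4, hdet]; simp; ring
  -- main deduction
  have key : ∀ p p' : K, Tor F δ p p' → eval 0 (M * N - N * M).det = - (p - p') ^ 2 → w = 0 := by
    intro p p' hp hd
    obtain ⟨c, s, hps, hcs⟩ := hp.diff
    rw [e0, hps] at hd
    have hu : u = (2 * algebraMap F K s) ^ 2 := by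
      have : (u - (2 * algebraMap F K s) ^ 2) * δ ^ 2 = 0 := by linear_combination -hd
      exact sub_eq_zero.1 ((mul_eq_zero.1 this).resolve_right (pow_ne_zero 2 hδ0))
    have h5 : 4 * ((algebraMap F K c) ^ 2 + (algebraMap F K s * algebraMap F K w) ^ 2) = 0 := by
      rw [hu] at ew
      linear_combination 4 * hcs - ew
    have h6 : c ^ 2 + (s * w) ^ 2 = 0 := by
      have := (mul_eq_zero.1 h5).resolve_left h4K
      apply (algebraMap F K).injective
      simpa using this
    have hc : c = 0 := by
      by_contra hc
      apply hneg (s * w / c)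
      field_simp
      linear_combination h6
    have hsw : s * w = 0 := by
      rw [hc] at h6
      exact pow_eq_zero_iff (two_ne_zero) |>.1 (by linear_combination h6)
    rcases mul_eq_zero.1 hsw with hs | hw
    · rw [hs, hc] at hcs
      simp at hcs
    · exact hw
  have hdd : (M * N - N * M).det = (M 0 1 * N 1 0 - N 0 1 * M 1 0) * (M 1 0 * N 0 1 - N 1 0 * M 0 1)
    - (M 0 0 * N 0 1 + M 0 1 * N 1 1 - N 0 0 * M 0 1 - N 0 1 * M 1 1) *
      (M 1 0 * N 0 0 + M 1 1 * N 1 0 - N 1 0 * M 0 0 - N 1 1 * M 1 0) := by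
    rw [det_fin_two]
    simp only [Matrix.sub_apply, Matrix.mul_apply, Fin.sum_univ_two]
    ring
  obtain ⟨p, p', hp, hM⟩ := hM
  obtain ⟨q, q', hq, hN⟩ := hN
  rw [trace_fin_two, eval_add] at t1 t2
  have hp1 : p * p' = 1 := by obtain ⟨_, _, _, _, h⟩ := hp; exact h
  have hq1 : q * q' = 1 := by obtain ⟨_, _, _, _, h⟩ := hq; exact h
  rcases hM with ⟨h1, h2, h3, h4⟩ | ⟨h1, h2, h3, h4⟩ <;>
  rcases hN with ⟨k1, k2, k3, k4⟩ | ⟨k1, k2, k3, k4⟩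
  · have h5 : eval 0 (M * N - N * M).det = 0 := by
      rw [hdd]; simp [h1, h2, h3, h4, k1, k2, k3, k4]
    rw [e0] at h5
    have hu : u = 0 := by simpa [hδ0] using h5
    rw [hu] at ew
    simp at ew
    exact h4K ew.symm
  · have hw := key _ _ hp (by
      rw [hdd]; simp only [eval_add, eval_sub, eval_mul, h1, h2, h3, h4, k1, k2, k3, k4]
      linear_combination - (p - p') ^ 2 * hq1)
    rw [hw, map_zero, k1, k4] at t2
    simp at t2
  · have hw := key _ _ hq (by
      rw [hdd]; simp only [eval_add, eval_sub, eval_mul, h1, h2, h3, h4, k1, k2, k3, k4]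
      linear_combination - (q - q') ^ 2 * hp1)
    rw [hw, map_zero, h1, h4] at t1
    simp at t1
  · have hw := key _ _ (hp.mul hδ hq.swap) (by
      rw [hdd]; simp only [eval_add, eval_sub, eval_mul, h1, h2, h3, h4, k1, k2, k3, k4]
      ring)
    rw [hw, map_zero, h1, h4] at t1
    simp at t1

/-- The shape to first order, in the parabolic case. -/
def ShP (F : Type*) {K : Type*} [Field F] [Field K] [Algebra F K] (M : Matrix (Fin 2) (Fin 2) K[X]) : Prop :=
  ∃ ε b e : F,
    (((M 0 0).coeff 0 = algebraMap F K ε ∧ (M 0 0).coeff 1 = 0 ∧ (M 0 1).coeff 0 = 0 ∧ (M 0 1).coeff 1 = algebraMap F K b) ∧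
      ((M 1 0).coeff 0 = 0 ∧ (M 1 0).coeff 1 = algebraMap F K e ∧ (M 1 1).coeff 0 = algebraMap F K ε ∧ (M 1 1).coeff 1 = 0)) ∨
    (((M 0 0).coeff 0 = 0 ∧ (M 0 0).coeff 1 = algebraMap F K b ∧ (M 0 1).coeff 0 = algebraMap F K ε ∧ (M 0 1).coeff 1 = 0) ∧
      ((M 1 0).coeff 0 = - algebraMap F K ε ∧ (M 1 0).coeff 1 = 0 ∧ (M 1 1).coeff 0 = 0 ∧ (M 1 1).coeff 1 = algebraMap F K e))

theorem ShP.mul (M N : Matrix (Fin 2) (Fin 2) K[X])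
    (hM : ShP F M) (hN : ShP F N) : ShP F (M * N) := by
  obtain ⟨ε, b, e, hM⟩ := hM
  obtain ⟨ε', b', e', hN⟩ := hN
  unfold ShP
  simp only [Matrix.mul_apply, Fin.sum_univ_two, coeff_add, mul_coeff_zero, mul_coeff_one]
  rcases hM with ⟨⟨h1, h2, h3, h4⟩, h5, h6, h7, h8⟩ | ⟨⟨h1, h2, h3, h4⟩, h5, h6, h7, h8⟩ <;>
  rcases hN with ⟨⟨k1, k2, k3, k4⟩, k5, k6, k7, k8⟩ | ⟨⟨k1, k2, k3, k4⟩, k5, k6, k7, k8⟩ <;>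
  simp only [h1, h2, h3, h4, h5, h6, h7, h8, k1, k2, k3, k4, k5, k6, k7, k8]
  · refine ⟨ε * ε', ε * b' + b * ε', e * ε' + ε * e', Or.inl ⟨⟨?_, ?_, ?_, ?_⟩, ?_, ?_, ?_, ?_⟩⟩ <;>
      (try simp only [map_add, map_mul, map_neg, map_sub]) <;> ring
  · refine ⟨ε * ε', ε * b' - b * ε', ε' * e + ε * e', Or.inr ⟨⟨?_, ?_, ?_, ?_⟩, ?_, ?_, ?_, ?_⟩⟩ <;>
      (try simp only [map_add, map_mul, map_neg, map_sub]) <;> ring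
  · refine ⟨ε * ε', ε * e' + b * ε', - ε * b' + ε' * e, Or.inr ⟨⟨?_, ?_, ?_, ?_⟩, ?_, ?_, ?_, ?_⟩⟩ <;>
      (try simp only [map_add, map_mul, map_neg, map_sub]) <;> ring
  · refine ⟨- (ε * ε'), ε * e' + b * ε', - ε * b' - ε' * e, Or.inl ⟨⟨?_, ?_, ?_, ?_⟩, ?_, ?_, ?_, ?_⟩⟩ <;>
      (try simp only [map_add, map_mul, map_neg, map_sub]) <;> ring

theorem coeff_two_mul (f g : K[X]) (hf : f.coeff 0 = 0) (hg : g.coeff 0 = 0) :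
    (f * g).coeff 2 = f.coeff 1 * g.coeff 1 := by
  rw [coeff_mul]
  simp [Finset.Nat.antidiagonal_succ, hf, hg]

theorem contra_par (h2 : (2 : F) ≠ 0) (hneg : ∀ x : F, x ^ 2 ≠ -1) (w : F) (M N : Matrix (Fin 2) (Fin 2) K[X])
    (hM : ShP F M) (hN : ShP F N) {u : K}
    (hdet : (M * N - N * M).det = C u * (- X ^ 2))
    (h4 : eval (algebraMap F K w) (M * N - N * M).det = 4) : False := by
  have e2 : (M * N - N * M).det.coeff 2 = -u := by
    rw [hdet, coeff_C_mul]; simp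
  have key : ∀ f : F, (M * N - N * M).det.coeff 2 = - (algebraMap F K f) ^ 2 → False := by
    intro f hf
    rw [e2] at hf
    have hu : u = (algebraMap F K f) ^ 2 := by linear_combination -hf
    rw [hdet, hu] at h4
    simp at h4
    have h5 : -(f ^ 2 * w ^ 2) = 4 := by
      apply (algebraMap F K).injective
      rw [map_ofNat]
      simpa using h4
    apply hneg (f * w / 2)
    field_simp
    linear_combination -h5
  have hdd : (M * N - N * M).det = (M 0 1 * N 1 0 - N 0 1 * M 1 0) * (M 1 0 * N 0 1 - N 1 0 * M 0 1)
    - (M 0 0 * N 0 1 + M 0 1 * N 1 1 - N 0 0 * M 0 1 - N 0 1 * M 1 1) *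
      (M 1 0 * N 0 0 + M 1 1 * N 1 0 - N 1 0 * M 0 0 - N 1 1 * M 1 0) := by
    rw [det_fin_two]
    simp only [Matrix.sub_apply, Matrix.mul_apply, Fin.sum_univ_two]
    ring
  obtain ⟨ε, b, e, hM⟩ := hM
  obtain ⟨ε', b', e', hN⟩ := hN
  rw [hdd, coeff_sub] at key
  rcases hM with ⟨⟨h1, h2, h3, h4⟩, h5, h6, h7, h8⟩ | ⟨⟨h1, h2, h3, h4⟩, h5, h6, h7, h8⟩ <;>
  rcases hN with ⟨⟨k1, k2, k3, k4⟩, k5, k6, k7, k8⟩ | ⟨⟨k1, k2, k3, k4⟩, k5, k6, k7, k8⟩ <;>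
  rw [coeff_two_mul _ _ (by
      simp only [coeff_add, coeff_sub, mul_coeff_zero, mul_coeff_one, h1, h2, h3, h4, h5, h6, h7, h8, k1, k2, k3, k4, k5, k6, k7, k8]; ring) (by
      simp only [coeff_add, coeff_sub, mul_coeff_zero, mul_coeff_one, h1, h2, h3, h4, h5, h6, h7, h8, k1, k2, k3, k4, k5, k6, k7, k8]; ring),
    coeff_two_mul _ _ (by
      simp only [coeff_add, coeff_sub, mul_coeff_zero, mul_coeff_one, h1, h2, h3, h4, h5, h6, h7, h8, k1, k2, k3, k4, k5, k6, k7, k8]; ring) (by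
      simp only [coeff_add, coeff_sub, mul_coeff_zero, mul_coeff_one, h1, h2, h3, h4, h5, h6, h7, h8, k1, k2, k3, k4, k5, k6, k7, k8]; ring)] at key <;>
  simp only [coeff_add, coeff_sub, mul_coeff_zero, mul_coeff_one, h1, h2, h3, h4, h5, h6, h7, h8, k1, k2, k3, k4, k5, k6, k7, k8] at key
  · refine key 0 ?_
    simp only [map_zero]; ring
  · refine key (ε' * (b + e)) ?_
    simp only [map_add, map_mul]; ring
  · refine key (ε * (b' + e')) ?_
    simp only [map_add, map_mul]; ring
  · refine key (ε * (e' - b') - ε' * (e - b)) ?_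
    simp only [map_add, map_mul, map_sub]; ring

end shapes

end pieceH

section pieceI

open Matrix Polynomial

section setup
variable {F K : Type*} [Field F] [Field K] [Algebra F K]

theorem exists_eig [IsAlgClosed K] (M : Matrix (Fin 2) (Fin 2) K) (hM : M.det = 1) :
    ∃ α β : K, α * β = 1 ∧ α + β = M.trace ∧ ∃ v : Fin 2 → K, v ≠ 0 ∧ M *ᵥ v = β • v := by
  obtain ⟨β, hβ⟩ := IsAlgClosed.exists_root (X ^ 2 - C M.trace * X + 1 : K[X]) (by
    have : (X ^ 2 - C M.trace * X + 1 : K[X]).degree = 2 := by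
      rw [sub_add]; compute_degree!
    rw [this]; norm_num)
  have hr : β ^ 2 - M.trace * β + 1 = 0 := by simpa [IsRoot] using hβ
  refine ⟨M.trace - β, β, by linear_combination -hr, by ring, ?_⟩
  obtain ⟨v, hv, h⟩ := Matrix.exists_mulVec_eq_zero_iff.2 (show (M - β • 1).det = 0 by
    rw [det_fin_two, trace_fin_two] at *
    simp
    linear_combination hr + hM)
  refine ⟨v, hv, ?_⟩
  rw [Matrix.sub_mulVec, Matrix.smul_mulVec, Matrix.one_mulVec] at h
  exact sub_eq_zero.1 h

theorem no_common (h20 : (2 : F) ≠ 0) {m : ℕ} (hm : 0 < m)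
    (θ : Monoid.Coprod (Multiplicative (ZMod 2)) (Multiplicative (ZMod m)) →*
      SpecialLinearGroup (Fin 2) F ⧸ Subgroup.center (SpecialLinearGroup (Fin 2) F))
    (g1 g2 : Monoid.Coprod (Multiplicative (ZMod 2)) (Multiplicative (ZMod m)))
    (h1 h2 : SpecialLinearGroup (Fin 2) F) (hD : (h1.1 * h2.1 - h2.1 * h1.1).det = 4)
    (e1 : θ g1 = QuotientGroup.mk h1) (e2 : θ g2 = QuotientGroup.mk h2)
    (A0 B0 : SpecialLinearGroup (Fin 2) F)
    (hA0 : θ (Monoid.Coprod.inl (Multiplicative.ofAdd 1)) = QuotientGroup.mk A0)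
    (hB0 : θ (Monoid.Coprod.inr (Multiplicative.ofAdd 1)) = QuotientGroup.mk B0)
    (v : Fin 2 → K) (hv : v ≠ 0) (a b : K)
    (ha : (algebraMap F K).mapMatrix A0.1 *ᵥ v = a • v)
    (hb : (algebraMap F K).mapMatrix B0.1 *ᵥ v = b • v) : False := by
  have good : ∀ x, ∃ (n : SpecialLinearGroup (Fin 2) F) (c : K), θ x = QuotientGroup.mk n ∧
      (algebraMap F K).mapMatrix n.1 *ᵥ v = c • v := by
    apply coprod_ind hm
    · refine ⟨1, 1, by simp, ?_⟩
      change (algebraMap F K).mapMatrix 1 *ᵥ v = _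
      rw [map_one, one_mulVec, one_smul]
    · exact ⟨_, _, hA0, ha⟩
    · exact ⟨_, _, hB0, hb⟩
    · rintro x y ⟨n, c, hn, hc⟩ ⟨n', c', hn', hc'⟩
      refine ⟨n * n', c' * c, by rw [map_mul, hn, hn']; rfl, ?_⟩
      change (algebraMap F K).mapMatrix (n.1 * n'.1) *ᵥ v = _
      rw [map_mul, ← mulVec_mulVec, hc', mulVec_smul, hc, smul_smul]
  have good' : ∀ x (N : SpecialLinearGroup (Fin 2) F), θ x = QuotientGroup.mk N →
      ∃ c : K, (algebraMap F K).mapMatrix N.1 *ᵥ v = c • v := by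
    intro x N hN
    obtain ⟨n, c, hn, hc⟩ := good x
    obtain ⟨r, -, hr⟩ := mk_eq_iff.1 (hn.symm.trans hN)
    refine ⟨algebraMap F K r * c, ?_⟩
    have : (algebraMap F K).mapMatrix (r • n.1) = algebraMap F K r • (algebraMap F K).mapMatrix n.1 := by
      ext i j; simp
    rw [hr, this, smul_mulVec, hc, smul_smul]
  obtain ⟨c1, hc1⟩ := good' _ _ e1
  obtain ⟨c2, hc2⟩ := good' _ _ e2
  have h0 : ((algebraMap F K).mapMatrix (h1.1 * h2.1 - h2.1 * h1.1)).det = 0 := by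
    apply Matrix.exists_mulVec_eq_zero_iff.1
    refine ⟨v, hv, ?_⟩
    rw [map_sub, map_mul, map_mul, sub_mulVec, ← mulVec_mulVec, ← mulVec_mulVec, hc1, hc2,
      mulVec_smul, mulVec_smul, hc1, hc2, smul_smul, smul_smul, mul_comm, sub_self]
  rw [← RingHom.map_det, hD] at h0
  have h4 := (map_eq_zero _).1 h0
  apply h20
  have : (2 : F) * 2 = 0 := by linear_combination h4
  simpa using this

theorem pow_lin (b0 : Matrix (Fin 2) (Fin 2) F) (B : Matrix (Fin 2) (Fin 2) K[X])
    (h0 : b0.det = 1) (h1 : B.det = 1) (ht : B.trace = C (algebraMap F K b0.trace)) (n : ℕ) :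
    ∃ u v : F, b0 ^ n = u • b0 + v • 1 ∧ B ^ n = C (algebraMap F K u) • B + C (algebraMap F K v) • 1 := by
  induction n with
  | zero => exact ⟨0, 1, by simp, by simp⟩
  | succ n ih =>
    obtain ⟨u, v, e1, e2⟩ := ih
    refine ⟨u * b0.trace + v, -u, ?_, ?_⟩
    · rw [pow_succ, e1, add_mul, smul_mul, ch2, h0]
      simp only [smul_mul, one_mul, smul_sub, smul_smul]
      module
    · rw [pow_succ, e2, add_mul, smul_mul, ch2, h1, ht]
      simp only [smul_mul, one_mul, smul_sub, smul_smul, map_add, map_mul, map_neg]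
      module

end setup

end pieceI

section pieceJ

open Matrix Polynomial

section partthree

theorem part3 {F : Type*} (K : Type*) [Field F] [Field K] [Algebra F K] [IsAlgClosed K]
    (h20 : (2 : F) ≠ 0) (hneg : ∀ x : F, x ^ 2 ≠ -1) {m : ℕ} (hm : 0 < m)
    (θ : Monoid.Coprod (Multiplicative (ZMod 2)) (Multiplicative (ZMod m)) →*
      SpecialLinearGroup (Fin 2) F ⧸ Subgroup.center (SpecialLinearGroup (Fin 2) F))
    (g1 g2 : Monoid.Coprod (Multiplicative (ZMod 2)) (Multiplicative (ZMod m)))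
    (hg : Subgroup.closure {g1, g2} = ⊤)
    (h1 h2 : SpecialLinearGroup (Fin 2) F) (hD : (h1.1 * h2.1 - h2.1 * h1.1).det = 4)
    (t1 : h1.1.trace ≠ 0) (t2 : h2.1.trace ≠ 0)
    (e1 : θ g1 = QuotientGroup.mk h1) (e2 : θ g2 = QuotientGroup.mk h2) : False := by
  obtain ⟨A0, hA0⟩ := QuotientGroup.mk_surjective (θ (Monoid.Coprod.inl (Multiplicative.ofAdd 1)))
  obtain ⟨B0, hB0⟩ := QuotientGroup.mk_surjective (θ (Monoid.Coprod.inr (Multiplicative.ofAdd 1)))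
  have nc := no_common (K := K) h20 hm θ g1 g2 h1 h2 hD e1 e2 A0 B0 hA0.symm hB0.symm
  have dA : ((algebraMap F K).mapMatrix A0.1).det = 1 := by
    rw [← RingHom.map_det, A0.2, map_one]
  have dB : ((algebraMap F K).mapMatrix B0.1).det = 1 := by
    rw [← RingHom.map_det, B0.2, map_one]
  have smulv : ∀ (r : F) (v : Fin 2 → K), (algebraMap F K).mapMatrix (r • (1 : Matrix (Fin 2) (Fin 2) F)) *ᵥ v = algebraMap F K r • v := by
    intro r v
    have : (algebraMap F K).mapMatrix (r • (1 : Matrix (Fin 2) (Fin 2) F)) = algebraMap F K r • 1 := by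
      ext i j; fin_cases i <;> fin_cases j <;> simp
    rw [this, smul_mulVec, one_mulVec]
  have nsA : ∀ r : F, A0.1 ≠ r • 1 := by
    intro r hr
    obtain ⟨α, β, -, -, v, hv, h⟩ := exists_eig _ dB
    exact nc v hv (algebraMap F K r) β (by rw [hr, smulv]) h
  have nsB : ∀ r : F, B0.1 ≠ r • 1 := by
    intro r hr
    obtain ⟨α, β, -, -, v, hv, h⟩ := exists_eig _ dA
    exact nc v hv β (algebraMap F K r) h (by rw [hr, smulv])
  -- the squares
  have cA : A0 ^ 2 ∈ Subgroup.center (SpecialLinearGroup (Fin 2) F) := by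
    apply (QuotientGroup.eq_one_iff _).1
    rw [QuotientGroup.mk_pow, hA0, ← map_pow, ← map_pow, ← ofAdd_nsmul]
    have : (2 • (1 : ZMod 2)) = 0 := by decide
    rw [this]; simp
  have cB : B0 ^ m ∈ Subgroup.center (SpecialLinearGroup (Fin 2) F) := by
    apply (QuotientGroup.eq_one_iff _).1
    rw [QuotientGroup.mk_pow, hB0, ← map_pow, ← map_pow, ← ofAdd_nsmul]
    have : (m • (1 : ZMod m)) = 0 := by simp
    rw [this]; simp
  obtain ⟨rA, -, hrA⟩ := mem_center2.1 cA
  obtain ⟨rB, hrB2, hrB⟩ := mem_center2.1 cB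
  have hrA' : A0.1 * A0.1 = rA • 1 := by rw [← hrA, pow_two]; rfl
  have hrB' : B0.1 ^ m = rB • 1 := by rw [← hrB]; exact (Matrix.SpecialLinearGroup.coe_pow B0 m).symm
  have trA : A0.1.trace = 0 := by
    by_contra ht
    rw [ch2, A0.2] at hrA'
    apply nsA (A0.1.trace⁻¹ * (rA + 1))
    have : A0.1.trace • A0.1 = (rA + 1) • 1 := by
      rw [add_smul, ← hrA']; simp
    rw [mul_smul, ← this, smul_smul, inv_mul_cancel₀ ht, one_smul]
  obtain ⟨α, β, hαβ, htr, v, hv, hBv⟩ := exists_eig _ dB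
  obtain ⟨ι, hι⟩ : ∃ ι, ι = algebraMap F K := ⟨_, rfl⟩
  have htr' : α + β = ι B0.1.trace := by
    rw [htr, hι]; simp [trace_fin_two]
  obtain ⟨w, hw⟩ : ∃ w, w = (A0.1 * B0.1).trace := ⟨_, rfl⟩
  have hA11 : A0.1 1 1 = - A0.1 0 0 := by
    rw [trace_fin_two] at trA; linear_combination trA
  have hAd := A0.2
  rw [det_fin_two, hA11] at hAd
  have hAd' : - (ι (A0.1 0 0)) ^ 2 - ι (A0.1 0 1) * ι (A0.1 1 0) = 1 := by
    rw [← map_mul, ← map_pow, ← map_neg, ← map_sub, ← map_one ι]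
    congr 1; linear_combination hAd
  have hw' : ι w = ι (A0.1 0 0) * ι (B0.1 0 0) + ι (A0.1 0 1) * ι (B0.1 1 0) + ι (A0.1 1 0) * ι (B0.1 0 1)
      - ι (A0.1 0 0) * ι (B0.1 1 1) := by
    rw [hw, trace_fin_two, Matrix.mul_apply, Matrix.mul_apply, Fin.sum_univ_two, Fin.sum_univ_two, hA11]
    simp only [map_add, map_mul, map_neg]; ring
  have htr2 : α + β = ι (B0.1 0 0) + ι (B0.1 1 1) := by
    rw [htr', trace_fin_two, map_add]
  have hb0 : ι (B0.1 0 0) * v 0 + ι (B0.1 0 1) * v 1 = β * v 0 := by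
    have := congrFun hBv 0
    simpa [mulVec, dotProduct, Fin.sum_univ_two, hι] using this
  have hb1 : ι (B0.1 1 0) * v 0 + ι (B0.1 1 1) * v 1 = β * v 1 := by
    have := congrFun hBv 1
    simpa [mulVec, dotProduct, Fin.sum_univ_two, hι] using this
  obtain ⟨x0, hx0⟩ : ∃ x, x = ι (A0.1 0 0) * v 0 + ι (A0.1 0 1) * v 1 := ⟨_, rfl⟩
  obtain ⟨x1, hx1⟩ : ∃ x, x = ι (A0.1 1 0) * v 0 - ι (A0.1 0 0) * v 1 := ⟨_, rfl⟩
  have hP : (!![x0, v 0; x1, v 1] : Matrix (Fin 2) (Fin 2) K).det ≠ 0 := by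
    rw [det_fin_two_of]
    intro h0
    have key : ∀ c : K, x0 = c * v 0 → x1 = c * v 1 → False := by
      intro c h0 h1
      refine nc v hv c β ?_ hBv
      rw [← hι]
      ext i
      fin_cases i
      · simp [mulVec, dotProduct, Fin.sum_univ_two]
        rw [← h0, hx0]
      · simp [mulVec, dotProduct, Fin.sum_univ_two, hA11]
        rw [← h1, hx1]; ring
    by_cases hv0 : v 0 = 0
    · have hv1 : v 1 ≠ 0 := by
        intro hv1
        apply hv; ext i; fin_cases i <;> simp [hv0, hv1]
      rw [hv0] at h0 key
      refine key (x1 / v 1) ?_ (by field_simp)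
      have : x0 * v 1 = 0 := by linear_combination h0
      rw [(mul_eq_zero.1 this).resolve_right hv1]; ring
    · refine key (x0 / v 0) (by field_simp) ?_
      field_simp
      linear_combination -h0
  obtain ⟨A, hA⟩ : ∃ A : SpecialLinearGroup (Fin 2) K[X], A.1 = !![0, 1; -1, 0] :=
    ⟨⟨!![0, 1; -1, 0], by rw [det_fin_two_of]; ring⟩, rfl⟩
  obtain ⟨B, hB⟩ : ∃ B : SpecialLinearGroup (Fin 2) K[X], B.1 = !![C α, 0; X, C β] :=
    ⟨⟨!![C α, 0; X, C β], by rw [det_fin_two_of, ← C_mul, hαβ]; simp⟩, rfl⟩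
  have hA2 : A ^ 2 ∈ Subgroup.center (SpecialLinearGroup (Fin 2) K[X]) := by
    refine mem_center2.2 ⟨-1, by ring, ?_⟩
    rw [pow_two]
    change A.1 * A.1 = _
    rw [hA]
    ext i j; fin_cases i <;> fin_cases j <;> simp [Matrix.mul_apply, Fin.sum_univ_two]
  have hBm : B ^ m ∈ Subgroup.center (SpecialLinearGroup (Fin 2) K[X]) := by
    obtain ⟨u, z, hu1, hu2⟩ := pow_lin (K := K) B0.1 B.1 B0.2 B.2 (by
      rw [hB, trace_fin_two_of, ← C_add, htr', hι]) m
    have hu : u = 0 := by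
      by_contra hu
      rw [hrB'] at hu1
      apply nsB (u⁻¹ * (rB - z))
      have : u • B0.1 = (rB - z) • 1 := by
        rw [sub_smul, hu1]; simp
      rw [mul_smul, ← this, smul_smul, inv_mul_cancel₀ hu, one_smul]
    rw [hu, hrB'] at hu1
    have hz : z = rB := by
      have := congrFun (congrFun hu1 0) 0
      simp at this
      exact this.symm
    refine mem_center2.2 ⟨C (algebraMap F K z), ?_, ?_⟩
    · rw [← C_pow, ← map_pow, hz, hrB2]; simp
    · rw [show (B ^ m).1 = B.1 ^ m from Matrix.SpecialLinearGroup.coe_pow B m, hu2, hu]; simp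
  have hAP : (algebraMap F K).mapMatrix A0.1 * !![x0, v 0; x1, v 1] = !![x0, v 0; x1, v 1] * (evalRingHom (ι w)).mapMatrix A.1 := by
    rw [← hι, hA]
    ext i j; fin_cases i <;> fin_cases j <;> simp [Matrix.mul_apply, Fin.sum_univ_two, hA11]
    · rw [hx0, hx1]; linear_combination - v 0 * hAd'
    · rw [hx0]
    · rw [hx0, hx1]; linear_combination - v 1 * hAd'
    · rw [hx1]; ring
  have hBP : (algebraMap F K).mapMatrix B0.1 * !![x0, v 0; x1, v 1] = !![x0, v 0; x1, v 1] * (evalRingHom (ι w)).mapMatrix B.1 := by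
    rw [← hι, hB]
    ext i j; fin_cases i <;> fin_cases j <;> simp [Matrix.mul_apply, Fin.sum_univ_two]
    · rw [hx0, hx1, hw']
      linear_combination (- ι (A0.1 0 0)) * hb0 - ι (A0.1 0 1) * hb1 - (ι (A0.1 0 0) * v 0 + ι (A0.1 0 1) * v 1) * htr2
    · linear_combination hb0
    · rw [hx0, hx1, hw']
      linear_combination (- ι (A0.1 1 0)) * hb0 + ι (A0.1 0 0) * hb1 - (ι (A0.1 1 0) * v 0 - ι (A0.1 0 0) * v 1) * htr2
    · linear_combination hb1
  have hdet : (A.1 * B.1 - B.1 * A.1).det = - (X ^ 2 + C ((α - β) ^ 2)) := by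
    rw [hA, hB, det_fin_two]
    simp [Matrix.mul_apply, Fin.sum_univ_two]
    ring
  have hne : (A.1 * B.1 - B.1 * A.1).det ≠ 0 := by
    rw [hdet, neg_ne_zero]
    intro h
    have := congrArg (fun f => coeff f 2) h
    simp only [coeff_add, coeff_X_pow, coeff_C, coeff_zero] at this
    norm_num at this
  have hδ : (α - β) ^ 2 = algebraMap F K (B0.1.trace ^ 2 - 4) := by
    rw [map_sub, map_pow, ← hι, ← htr', map_ofNat]
    linear_combination -4 * hαβ
  have h2K : ι 2 ≠ 0 := by rw [hι]; exact (_root_.map_ne_zero _).2 h20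
  have hι2 : ι 2 = 2 := map_ofNat ι 2
  have hhalf : ι (1 / 2) * 2 = 1 := by rw [← hι2, ← map_mul, ← map_one ι]; congr 1; field_simp
  have hy : ι (B0.1.trace / 2) = (α + β) * ι (1 / 2) := by
    rw [htr', ← map_mul]; congr 1; ring
  by_cases hd0 : α - β = 0
  · obtain ⟨M, N, hM, hN, ⟨u, hu⟩, h4, -, -⟩ := lift_main hm θ g1 g2 hg h1 h2 hD t1 t2 e1 e2 A0 B0 hA0.symm hB0.symm A B
      hA2 hBm _ hP (ι w) hAP hBP (ShP F) ⟨1, 0, 0, Or.inl (by simp [coeff_one])⟩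
      ⟨1, 0, 0, Or.inr (by rw [hA]; simp [coeff_one])⟩
      ⟨B0.1.trace / 2, 0, 1, Or.inl (by
        have hα : α = (α + β) * ι (1 / 2) := by linear_combination hd0 * ι (1/2) - α * hhalf
        have hβ : β = α := by linear_combination -hd0
        rw [hB, ← hι, hy, ← hα, hβ]
        simp [coeff_C])⟩ ShP.mul hne
    rw [hι] at h4
    refine contra_par h20 hneg w M N hM hN (u := u) ?_ h4
    rw [hu, hdet, hd0]; simp
  · obtain ⟨M, N, hM, hN, ⟨u, hu⟩, h4, k1, k2⟩ := lift_main hm θ g1 g2 hg h1 h2 hD t1 t2 e1 e2 A0 B0 hA0.symm hB0.symm A B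
      hA2 hBm _ hP (ι w) hAP hBP (ShN F (α - β))
      ⟨1, 1, ⟨1, 0, by simp, by simp, by simp⟩, Or.inl (by simp)⟩
      ⟨1, 1, ⟨1, 0, by simp, by simp, by simp⟩, Or.inr (by rw [hA]; simp)⟩
      ⟨α, β, ⟨B0.1.trace / 2, 1 / 2, by
          rw [← hι, hy]; linear_combination - α * hhalf, by
          rw [← hι, hy]; linear_combination - β * hhalf, hαβ⟩, Or.inl (by rw [hB]; simp)⟩
      (ShN.mul hδ) hne
    rw [hι] at h4 k1 k2
    refine contra_nonpar h20 hneg hδ hd0 w M N hM hN (u := u) ?_ h4 k1 k2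
    rw [hu, hdet]

end partthree

end pieceJ

/-- for `G = C_2 ∗ C_m` and `H = PSL(2,q)` where `q = p^k ≡ 3 (mod 4)`,
`q ≠ 3`, and `p ∣ m` or `gcd(m,(q+1)/2) ≥ 3` or `gcd(m,(q-1)/2) ≥ 3`, the group `H`
is a homomorphic image of `G`, and some generating pair of `H` does not lift to a
generating pair of `G` along any homomorphism `G → H`. -/
theorem stmt2 (m p k : ℕ) (hm : 0 < m) (hp : p.Prime)
    (F : Type) [Field F] [Fintype F] (hcard : Fintype.card F = p ^ k)
    (hq3mod4 : p ^ k % 4 = 3) (hq3 : p ^ k ≠ 3)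
    (hcond : p ∣ m ∨ 3 ≤ Nat.gcd m ((p ^ k + 1) / 2) ∨ 3 ≤ Nat.gcd m ((p ^ k - 1) / 2)) :
    (∃ φ : Monoid.Coprod (Cyc 2) (Cyc m) →* PSL2 F, Function.Surjective φ) ∧
    ∃ h1 h2 : PSL2 F, Subgroup.closure {h1, h2} = ⊤ ∧
      ∀ (θ : Monoid.Coprod (Cyc 2) (Cyc m) →* PSL2 F)
        (g1 g2 : Monoid.Coprod (Cyc 2) (Cyc m)),
        Subgroup.closure {g1, g2} = ⊤ → (θ g1, θ g2) ≠ (h1, h2) := by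
  have hodd : p ^ k % 2 = 1 := by omega
  haveI : Fact p.Prime := ⟨hp⟩
  have hk0 : k ≠ 0 := by rintro rfl; simp at hq3mod4
  haveI : CharP F p := by
    obtain ⟨n, hn, hc⟩ := FiniteField.card F (ringChar F)
    have : ringChar F = p := by
      rw [hc] at hcard
      have h1 : ringChar F ∣ p ^ k := by rw [← hcard]; exact dvd_pow_self _ n.ne_zero
      exact (Nat.prime_dvd_prime_iff_eq hn hp).1 (hn.dvd_of_dvd_pow h1)
    exact this ▸ ringChar.charP F
  have hp2 : p ≠ 2 := by
    rintro rfl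
    rw [← Nat.odd_iff] at hodd
    have := (Nat.odd_pow_iff hk0).1 hodd
    exact absurd this (by decide)
  have h20 : (2 : F) ≠ 0 := by
    intro h
    have : ((2 : ℕ) : F) = 0 := by exact_mod_cast h
    have := (CharP.cast_eq_zero_iff F p 2).1 this
    exact hp2 ((Nat.prime_dvd_prime_iff_eq hp Nat.prime_two).1 this)
  have hneg : ∀ x : F, x ^ 2 ≠ -1 := by
    intro x hx
    have := FiniteField.isSquare_neg_one_iff.1 (⟨x, by rw [← hx]; ring⟩ : IsSquare (-1 : F))
    rw [hcard] at this
    exact this hq3mod4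
  have hp3 : 3 ≤ p := by
    have := hp.two_le
    omega
  have hc : (Fintype.card F = p ∧ (3 : F) ≠ 0) ∨ 27 ≤ Fintype.card F := by
    rcases Nat.lt_or_ge k 3 with hk | hk
    · left
      have hk1 : k = 1 := by
        have : k ≠ 2 := by
          rintro rfl
          have : p % 4 = 0 ∨ p % 4 = 1 ∨ p % 4 = 2 ∨ p % 4 = 3 := by omega
          rcases this with h | h | h | h <;> simp [pow_two, Nat.mul_mod, h] at hq3mod4
        omega
      rw [hk1, pow_one] at hcard hq3
      refine ⟨hcard, ?_⟩
      intro h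
      have : ((3 : ℕ) : F) = 0 := by exact_mod_cast h
      have := (CharP.cast_eq_zero_iff F p 3).1 this
      exact hq3 ((Nat.prime_dvd_prime_iff_eq hp Nat.prime_three).1 this)
    · right
      rw [hcard]
      calc 27 = 3 ^ 3 := by norm_num
        _ ≤ p ^ 3 := Nat.pow_le_pow_left hp3 3
        _ ≤ p ^ k := Nat.pow_le_pow_right (by omega) hk
  constructor
  · obtain ⟨y, hy, hyb⟩ := exists_y m p k hp hcard h20 hq3mod4 hcond
    obtain ⟨a, b, hgen, ha, hb⟩ := part1 (p := p) hneg h20 (hc.imp_left And.left) hy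
    exact surj_part hm a b hgen ha (hyb b.1 b.2 hb)
  · obtain ⟨h1, h2, hgen, hD, t1, t2⟩ := part2 (p := p) hneg h20 hc
    refine ⟨QuotientGroup.mk h1, QuotientGroup.mk h2, ?_, ?_⟩
    · apply top_of_lift
      apply hgen
      · exact Subgroup.subset_closure (by simp)
      · exact Subgroup.subset_closure (by simp)
    · intro θ g1 g2 hg he
      rw [Prod.mk.injEq] at he
      exact part3 (AlgebraicClosure F) h20 hneg hm θ g1 g2 hg h1 h2 hD t1 t2 he.1 he.2
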